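/- Let n ≥ 1, let b ≥ 1 be an integer, and let α ∈ (1/2, 1] satisfy 2α < n and nb > 2α(b+1). Let p(·) ∈ P^log(ℝ^n) with p⁻ > b+1 and 2α·p⁺ < n(b+1). Then there exists C > 0 such that for every measurable u : (0,∞)×ℝ^n → ℝ: N_{p(·), nb/(2α)}( (t,x) ↦ ∫_0^t (𝔤_{t−s}^α ∗ (|u|^b u)(s,·))(x) ds ) ≤ C · ( N_{p(·), nb/(2α)}(u) )^{b+1}. -/

import Mathlib

open MeasureTheory Set
open scoped ENNReal FourierTransform

noncomputable section

/-- Euclidean space `ℝ^n`. -/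
abbrev Rn (n : ℕ) := EuclideanSpace ℝ (Fin n)

/-- Luxemburg norm of an `ℝ≥0∞`-valued function for a variable exponent `p`. -/
def luxNorm {Ω : Type*} [MeasurableSpace Ω] (μ : Measure Ω) (p : Ω → ℝ) (f : Ω → ℝ≥0∞) : ℝ≥0∞ :=
  sInf {lam : ℝ≥0∞ | 0 < lam ∧ ∫⁻ x, (f x / lam) ^ (p x) ∂μ ≤ 1}

/-- Luxemburg norm `‖f‖_{L^{p(·)}}` of a real-valued function. -/
def luxNormR {Ω : Type*} [MeasurableSpace Ω] (μ : Measure Ω) (p : Ω → ℝ) (f : Ω → ℝ) : ℝ≥0∞ :=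
  luxNorm μ p (fun x => ENNReal.ofReal |f x|)

/-- `p(·) ∈ P^log(Ω)`: measurable, with values in `[1,∞)` on `Ω`, locally log-Hölder
continuous on `Ω`, and satisfying the log-Hölder decay condition on `Ω`. -/
def IsPLog {E : Type*} [NormedAddCommGroup E] [MeasurableSpace E] (Ω : Set E) (p : E → ℝ) : Prop :=
  Measurable p ∧ (∀ x ∈ Ω, 1 ≤ p x) ∧
  ∃ C₁ > (0:ℝ), ∃ C₂ > (0:ℝ), ∃ pinf : ℝ,
    (∀ x ∈ Ω, ∀ y ∈ Ω, x ≠ y →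
      |1 / p x - 1 / p y| ≤ C₁ / Real.log (Real.exp 1 + 1 / ‖x - y‖)) ∧
    (∀ x ∈ Ω, |1 / p x - 1 / pinf| ≤ C₂ / Real.log (Real.exp 1 + ‖x‖))

/-- The fractional heat kernel `𝔤_t^α` on `ℝ^n`: the inverse Fourier transform of
`ξ ↦ exp (-t‖ξ‖^{2α})` (it is real-valued; we take the real part). -/
def gKer (n : ℕ) (α t : ℝ) (x : Rn n) : ℝ :=
  (𝓕⁻ (fun ξ : Rn n => (Real.exp (-t * ‖ξ‖ ^ (2 * α)) : ℂ)) x).re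

/-- Convolution on `ℝ^n`. -/
def conv (n : ℕ) (g f : Rn n → ℝ) (x : Rn n) : ℝ := ∫ y, g (x - y) * f y

/-- `x ↦ ess sup_{t>0} |u(t,x)|`, as an `ℝ≥0∞`-valued function. -/
def timeSup (n : ℕ) (u : ℝ → Rn n → ℝ) (x : Rn n) : ℝ≥0∞ :=
  essSup (fun t => ENNReal.ofReal |u t x|) (volume.restrict (Ioi (0:ℝ)))

/-- Mixed norm `‖f‖_{𝓛^{p(·)}_r} = max {‖f‖_{L^{p(·)}}, ‖f‖_{L^r}}`. -/
def mixedNorm (n : ℕ) (p : Rn n → ℝ) (r : ℝ) (f : Rn n → ℝ) : ℝ≥0∞ :=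
  max (luxNormR volume p f) (luxNormR volume (fun _ => r) f)

/-- `N_{p(·),r}(u) = ‖x ↦ ess sup_{t>0}|u(t,x)|‖_{𝓛^{p(·)}_r}`. -/
def mixedN (n : ℕ) (p : Rn n → ℝ) (r : ℝ) (u : ℝ → Rn n → ℝ) : ℝ≥0∞ :=
  max (luxNorm volume p (timeSup n u)) (luxNorm volume (fun _ => r) (timeSup n u))

open scoped NNReal

/-!
Subordination to Gaussian kernels bounds the fractional heat kernel `𝔤_t^α (x)` by a constant times
both `t ^ (-n / 2α)` and `‖x‖ ^ (-n)`. Integrating the better of the two bounds over `t` leaves a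
multiple of `‖x‖ ^ (2α - n)`, so, uniformly in time, the nonlinear term is dominated by the Riesz
potential of order `2α` of `U ^ (b + 1)`, where `U x = ess sup_t |u t x|`. With `r = nb / 2α`,
Hedberg's trick splits this potential at a radius that balances the maximal function `M (U ^ (b+1))`
against the `L^r` norm of `U`, and gives a bound by `M (U ^ (b + 1)) ^ (1 / (b + 1))` times the
`b`-th power of that norm. The exponent `p / (b + 1)` is log-Hölder continuous and bounded away from
`1`, so the maximal operator is bounded on `L^{p(·) / (b + 1)}`.
-/

section PowerIntegrals

theorem setLIntegral_Ioc_rpow {a Y : ℝ} (ha : 0 < a) (hY : 0 ≤ Y) :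
    ∫⁻ t in Ioc 0 Y, ENNReal.ofReal (t ^ (a - 1)) = ENNReal.ofReal (Y ^ a / a) := by
  have hint : IntervalIntegrable (fun t : ℝ => t ^ (a - 1)) volume 0 Y :=
    intervalIntegral.intervalIntegrable_rpow' (by linarith)
  rw [← ofReal_integral_eq_lintegral_ofReal
      ((intervalIntegrable_iff_integrableOn_Ioc_of_le hY).1 hint)
      ((ae_restrict_iff' measurableSet_Ioc).2 (ae_of_all _ fun t ht => Real.rpow_nonneg ht.1.le _)),
    ← intervalIntegral.integral_of_le hY, integral_rpow (Or.inl (by linarith)), sub_add_cancel,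
    Real.zero_rpow ha.ne', sub_zero]

theorem setLIntegral_Ioi_rpow {b Y : ℝ} (hb : 0 < b) (hY : 0 < Y) :
    ∫⁻ t in Ioi Y, ENNReal.ofReal (t ^ (-b - 1)) = ENNReal.ofReal (Y ^ (-b) / b) := by
  rw [← ofReal_integral_eq_lintegral_ofReal
      (integrableOn_Ioi_rpow_of_lt (by linarith) hY)
      ((ae_restrict_iff' measurableSet_Ioi).2
        (ae_of_all _ fun t ht => Real.rpow_nonneg (hY.trans ht).le _)),
    integral_Ioi_rpow_of_lt (by linarith) hY, sub_add_cancel, neg_div_neg_eq]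

theorem lintegral_min_mul_rpow_le {a b : ℝ} (ha : 0 < a) (hb : 0 < b) (M : ℝ≥0∞) :
    ∫⁻ t in Ioi (0 : ℝ), min (M * ENNReal.ofReal (t ^ (a - 1))) (ENNReal.ofReal (t ^ (-b - 1)))
      ≤ ENNReal.ofReal (1 / a + 1 / b) * M ^ (b / (a + b)) := by
  have hθ : 0 < b / (a + b) := by positivity
  rcases eq_or_ne M 0 with rfl | hM0
  · simp
  rcases eq_or_ne M ∞ with rfl | hMtop
  · have hc : ENNReal.ofReal (1 / a + 1 / b) ≠ 0 := by
      rw [Ne, ENNReal.ofReal_eq_zero, not_le]; positivity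
    rw [ENNReal.top_rpow_of_pos hθ, ENNReal.mul_top hc]
    exact le_top
  lift M to ℝ≥0 using hMtop
  have hM : 0 < (M : ℝ) := NNReal.coe_pos.2 (pos_iff_ne_zero.2 (ENNReal.coe_ne_zero.1 hM0))
  -- The two branches of the minimum agree at `t = Y`.
  set Y : ℝ := (M : ℝ) ^ (-(a + b)⁻¹) with hYdef
  have hY : 0 < Y := Real.rpow_pos_of_pos hM _
  have hYb : Y ^ (-b) = (M : ℝ) ^ (b / (a + b)) := by
    rw [hYdef, ← Real.rpow_mul hM.le]; congr 1; ring
  have hYa : M * Y ^ a = (M : ℝ) ^ (b / (a + b)) := by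
    have h1 : b / (a + b) = 1 + -(a + b)⁻¹ * a := by field_simp; ring
    rw [hYdef, ← Real.rpow_mul hM.le, h1, Real.rpow_one_add' hM.le (h1 ▸ hθ.ne')]
  rw [← Ioc_union_Ioi_eq_Ioi hY.le, lintegral_union measurableSet_Ioi (Ioc_disjoint_Ioi le_rfl)]
  calc _ ≤ (∫⁻ t in Ioc 0 Y, M * ENNReal.ofReal (t ^ (a - 1))) +
        ∫⁻ t in Ioi Y, ENNReal.ofReal (t ^ (-b - 1)) := by
        gcongr with t t
        · exact min_le_left _ _
        · exact min_le_right _ _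
    _ = ENNReal.ofReal (M * Y ^ a / a) + ENNReal.ofReal (Y ^ (-b) / b) := by
        rw [lintegral_const_mul' _ _ ENNReal.coe_ne_top, setLIntegral_Ioc_rpow ha hY.le,
          setLIntegral_Ioi_rpow hb hY, ← ENNReal.ofReal_coe_nnreal (p := M),
          ← ENNReal.ofReal_mul hM.le, mul_div_assoc]
    _ = _ := by
        rw [hYa, hYb, ← ENNReal.ofReal_add (by positivity) (by positivity),
          ← ENNReal.ofReal_coe_nnreal (p := M), ENNReal.ofReal_rpow_of_pos hM,
          ← ENNReal.ofReal_mul (by positivity)]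
        congr 1; ring

theorem rpow_eq_mul_lintegral_indicator {a : ℝ} (ha : 0 < a) (y : ℝ≥0∞) :
    y ^ a = ENNReal.ofReal a *
      ∫⁻ t in Ioi (0 : ℝ),
        {t | ENNReal.ofReal t < y}.indicator 1 t * ENNReal.ofReal (t ^ (a - 1)) := by
  have coe_case (r : ℝ≥0) : (r : ℝ≥0∞) ^ a = ENNReal.ofReal a * ∫⁻ t in Ioi (0 : ℝ),
      {t | ENNReal.ofReal t < r}.indicator 1 t * ENNReal.ofReal (t ^ (a - 1)) := by
    have hset : (Ioi 0 ∩ {t : ℝ | ENNReal.ofReal t < r}) = Ioo 0 (r : ℝ) := by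
      ext t
      simp only [mem_inter_iff, mem_Ioi, mem_ofPred_eq, mem_Ioo]
      refine and_congr_right fun ht => ?_
      rw [← ENNReal.ofReal_coe_nnreal, ENNReal.ofReal_lt_ofReal_iff_of_nonneg ht.le]
    have hmeas : MeasurableSet {t : ℝ | ENNReal.ofReal t < r} :=
      measurableSet_lt ENNReal.measurable_ofReal measurable_const
    have hind (t : ℝ) : {t | ENNReal.ofReal t < r}.indicator 1 t * ENNReal.ofReal (t ^ (a - 1)) =
        {t | ENNReal.ofReal t < r}.indicator (fun t => ENNReal.ofReal (t ^ (a - 1))) t := by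
      by_cases ht : ENNReal.ofReal t < r <;> simp [ht]
    simp_rw [hind]
    rw [setLIntegral_indicator hmeas, inter_comm, hset, setLIntegral_congr Ioo_ae_eq_Ioc,
      setLIntegral_Ioc_rpow ha r.coe_nonneg, ← ENNReal.ofReal_mul ha.le, mul_div_cancel₀ _ ha.ne',
      ← ENNReal.ofReal_coe_nnreal, ENNReal.ofReal_rpow_of_nonneg r.coe_nonneg ha.le]
  induction y with
  | coe r => exact coe_case r
  | top =>
    rw [ENNReal.top_rpow_of_pos ha, eq_comm]
    refine ENNReal.eq_top_of_forall_nnreal_le fun r => ?_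
    have hr : (r : ℝ≥0∞) = ((r ^ a⁻¹ : ℝ≥0) : ℝ≥0∞) ^ a := by
      rw [← ENNReal.coe_rpow_of_nonneg _ ha.le, NNReal.rpow_inv_rpow ha.ne']
    rw [hr, coe_case]
    gcongr
    exact le_top

theorem lintegral_rpow_eq_mul_lintegral_meas_lt {Ω : Type*} [MeasurableSpace Ω] {μ : Measure Ω}
    [SFinite μ] {F : Ω → ℝ≥0∞} (hF : Measurable F) {a : ℝ} (ha : 0 < a) :
    ∫⁻ x, F x ^ a ∂μ = ENNReal.ofReal a *
      ∫⁻ t in Ioi (0 : ℝ), μ {x | ENNReal.ofReal t < F x} * ENNReal.ofReal (t ^ (a - 1)) := by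
  have hmeas : Measurable (Function.uncurry fun (x : Ω) (t : ℝ) =>
      {t | ENNReal.ofReal t < F x}.indicator 1 t * ENNReal.ofReal (t ^ (a - 1))) := by
    refine Measurable.mul ?_ (by fun_prop)
    exact measurable_one.indicator (s := {q : Ω × ℝ | ENNReal.ofReal q.2 < F q.1})
      (measurableSet_lt (by fun_prop) (by fun_prop))
  have hmeasure (t : ℝ) : μ {x | ENNReal.ofReal t < F x} =
      ∫⁻ x, {t | ENNReal.ofReal t < F x}.indicator (1 : ℝ → ℝ≥0∞) t ∂μ := by
    rw [← lintegral_indicator_one (measurableSet_lt measurable_const hF)]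
    rfl
  simp_rw [rpow_eq_mul_lintegral_indicator ha, hmeasure]
  rw [lintegral_const_mul' _ _ ENNReal.ofReal_ne_top, lintegral_lintegral_swap hmeas.aemeasurable]
  simp_rw [lintegral_mul_const' _ _ ENNReal.ofReal_ne_top]

end PowerIntegrals

section Averages

variable {Ω : Type*} [MeasurableSpace Ω] {ν : Measure Ω} [IsFiniteMeasure ν] {f : Ω → ℝ≥0∞}

theorem laverage_rpow_le (hf : AEMeasurable f ν) {p : ℝ} (hp : 1 ≤ p) :
    (⨍⁻ x, f x ∂ν) ^ p ≤ ⨍⁻ x, f x ^ p ∂ν := by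
  have hp0 : 0 < p := by linarith
  rcases eq_zero_or_neZero ν with rfl | hν
  · simp [hp0]
  have hmono := eLpNorm'_le_eLpNorm'_of_exponent_le (μ := (ν univ)⁻¹ • ν) (f := f) one_pos hp
    (hf.smul_measure _).aestronglyMeasurable
  simp only [eLpNorm'_eq_lintegral_enorm, enorm_eq_self, ENNReal.rpow_one, div_one] at hmono
  simpa only [laverage, ← ENNReal.rpow_mul, one_div, inv_mul_cancel₀ hp0.ne', ENNReal.rpow_one]
    using ENNReal.rpow_le_rpow hmono hp0.le

end Averages

section WeakToStrong

variable {Ω : Type*} [MeasurableSpace Ω] {μ : Measure Ω} [SFinite μ] {F f : Ω → ℝ≥0∞}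

theorem lintegral_rpow_le_of_mul_meas_lt_le (hF : Measurable F) (hf : Measurable f) {κ : ℝ}
    (hκ : 1 < κ) {A : ℝ≥0∞}
    (hweak : ∀ t : ℝ, 0 < t → ENNReal.ofReal t * μ {x | ENNReal.ofReal t < F x} ≤
      A * ∫⁻ x in {x | ENNReal.ofReal t < 2 * f x}, f x ∂μ) :
    ∫⁻ x, F x ^ κ ∂μ ≤
      A * (ENNReal.ofReal (κ / (κ - 1)) * 2 ^ (κ - 1)) * ∫⁻ x, f x ^ κ ∂μ := by
  have hκ0 : 0 < κ - 1 := sub_pos.2 hκ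
  have hlevel (t : ℝ) (ht : 0 < t) :
      μ {x | ENNReal.ofReal t < F x} * ENNReal.ofReal (t ^ (κ - 1)) ≤
        A * (μ.withDensity f {x | ENNReal.ofReal t < 2 * f x} *
          ENNReal.ofReal (t ^ (κ - 1 - 1))) := by
    have hsplit : t ^ (κ - 1) = t * t ^ (κ - 1 - 1) := by
      rw [← Real.rpow_one_add' ht.le (by linarith)]; congr 1; ring
    rw [withDensity_apply _ (measurableSet_lt measurable_const (hf.const_mul 2)), hsplit,
      ENNReal.ofReal_mul ht.le, ← mul_assoc, ← mul_assoc, mul_comm (μ _)]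
    exact mul_le_mul_left (hweak t ht) _
  calc ∫⁻ x, F x ^ κ ∂μ
      = ENNReal.ofReal κ * ∫⁻ t in Ioi (0 : ℝ),
          μ {x | ENNReal.ofReal t < F x} * ENNReal.ofReal (t ^ (κ - 1)) :=
        lintegral_rpow_eq_mul_lintegral_meas_lt hF (by linarith)
    _ ≤ ENNReal.ofReal κ * ∫⁻ t in Ioi (0 : ℝ),
          A * (μ.withDensity f {x | ENNReal.ofReal t < 2 * f x} *
            ENNReal.ofReal (t ^ (κ - 1 - 1))) := by
        gcongr ENNReal.ofReal κ * ?_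
        exact setLIntegral_mono' measurableSet_Ioi hlevel
    _ = A * ENNReal.ofReal (κ / (κ - 1)) * ∫⁻ x, (2 * f x) ^ (κ - 1) ∂μ.withDensity f := by
        have hanti : Antitone fun t : ℝ =>
            μ.withDensity f {x | ENNReal.ofReal t < 2 * f x} := fun s t hst =>
          measure_mono fun x hx => (ENNReal.ofReal_le_ofReal hst).trans_lt hx
        have hmeas : Measurable fun t : ℝ => μ.withDensity f {x | ENNReal.ofReal t < 2 * f x} *
            ENNReal.ofReal (t ^ (κ - 1 - 1)) := hanti.measurable.mul (by fun_prop)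
        rw [lintegral_const_mul _ hmeas,
          lintegral_rpow_eq_mul_lintegral_meas_lt (hf.const_mul 2) hκ0, mul_left_comm, mul_assoc A,
          ← mul_assoc (ENNReal.ofReal (κ / (κ - 1))), ← ENNReal.ofReal_mul (by positivity),
          div_mul_cancel₀ _ hκ0.ne']
    _ = _ := by
        have hpow (x : Ω) : f x * (2 * f x) ^ (κ - 1) = 2 ^ (κ - 1) * f x ^ κ := by
          rw [ENNReal.mul_rpow_of_nonneg _ _ hκ0.le, mul_left_comm]
          nth_rw 1 [← ENNReal.rpow_one (f x)]
          rw [← ENNReal.rpow_add_of_nonneg _ _ zero_le_one hκ0.le, add_sub_cancel]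
        rw [lintegral_withDensity_eq_lintegral_mul _ hf (by fun_prop)]
        simp only [Pi.mul_apply, hpow]
        rw [lintegral_const_mul _ (hf.pow_const κ)]
        ring

end WeakToStrong

/-- The centred Hardy–Littlewood maximal function of an `ℝ≥0∞`-valued function, over all radii. -/
def maximalFunction {X : Type*} [PseudoMetricSpace X] [MeasurableSpace X] (μ : Measure X)
    (f : X → ℝ≥0∞) (x : X) : ℝ≥0∞ :=
  ⨆ r > (0 : ℝ), ⨍⁻ y in Metric.ball x r, f y ∂μ

section MaximalFunction

open Metric

variable {X : Type*} [PseudoMetricSpace X] [MeasurableSpace X] {μ : Measure X} {f g : X → ℝ≥0∞}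

theorem setLAverage_le_maximalFunction (f : X → ℝ≥0∞) (x : X) {r : ℝ} (hr : 0 < r) :
    ⨍⁻ y in ball x r, f y ∂μ ≤ maximalFunction μ f x :=
  le_iSup₂ (f := fun (r : ℝ) (_ : r > 0) => ⨍⁻ y in ball x r, f y ∂μ) r hr

theorem maximalFunction_mono (hfg : ∀ y, f y ≤ g y) (x : X) :
    maximalFunction μ f x ≤ maximalFunction μ g x :=
  iSup₂_mono fun _ _ => lintegral_mono hfg

theorem maximalFunction_add_le (hf : Measurable f) (x : X) :
    maximalFunction μ (fun y => f y + g y) x ≤ maximalFunction μ f x + maximalFunction μ g x := by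
  refine iSup₂_le fun r hr => ?_
  rw [laverage, lintegral_add_left hf]
  exact add_le_add (setLAverage_le_maximalFunction f x hr) (setLAverage_le_maximalFunction g x hr)

theorem maximalFunction_le_of_le {c : ℝ≥0∞} (hf : ∀ y, f y ≤ c) (x : X) :
    maximalFunction μ f x ≤ c :=
  iSup₂_le fun _ _ => (lintegral_mono hf).trans <| by
    rw [lintegral_const]
    exact mul_le_of_le_one_right' (ENNReal.inv_mul_le_one _)

theorem lowerSemicontinuous_setLIntegral_ball [OpensMeasurableSpace X] (f : X → ℝ≥0∞) (r : ℝ) :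
    LowerSemicontinuous fun x => ∫⁻ y in ball x r, f y ∂μ := by
  intro x c hc
  have hUnion : ⋃ k : ℕ, ball x (r - 1 / (k + 1 : ℝ)) = ball x r := by
    refine Subset.antisymm (iUnion_subset fun k => ball_subset_ball (by
      have : (0 : ℝ) < 1 / (k + 1 : ℝ) := by positivity
      linarith)) fun y hy => ?_
    obtain ⟨k, hk⟩ := exists_nat_one_div_lt (sub_pos.2 (mem_ball.1 hy))
    exact mem_iUnion.2 ⟨k, mem_ball.2 (by linarith)⟩
  have hmono : Monotone fun k : ℕ => ball x (r - 1 / (k + 1 : ℝ)) := fun k l hkl =>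
    ball_subset_ball (sub_le_sub_left (Nat.one_div_le_one_div hkl) r)
  dsimp only at hc
  rw [← hUnion, setLIntegral_iUnion_of_directed _ hmono.directed_le] at hc
  obtain ⟨k, hk⟩ := lt_iSup_iff.1 hc
  have hk0 : (0 : ℝ) < 1 / (k + 1 : ℝ) := by positivity
  filter_upwards [ball_mem_nhds x hk0] with y hy
  refine hk.trans_le (lintegral_mono_set (ball_subset_ball' ?_))
  rw [dist_comm]
  linarith [mem_ball.1 hy]

end MaximalFunction

section AddHaar

open Metric Module

variable {E : Type*} [NormedAddCommGroup E] [MeasurableSpace E] [BorelSpace E] {μ : Measure E}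
  [μ.IsAddHaarMeasure] {f : E → ℝ≥0∞}

theorem measurable_maximalFunction (f : E → ℝ≥0∞) : Measurable (maximalFunction μ f) := by
  refine LowerSemicontinuous.measurable (lowerSemicontinuous_biSup fun r hr => ?_)
  simp_rw [setLAverage_eq, Measure.addHaar_ball_center μ _ r, ENNReal.div_eq_inv_mul]
  exact (ENNReal.continuous_const_mul
    (ENNReal.inv_ne_top.2 (measure_ball_pos μ 0 hr).ne')).comp_lowerSemicontinuous
    (lowerSemicontinuous_setLIntegral_ball f r) fun _ _ h => mul_le_mul_right h _

variable [NormedSpace ℝ E] [FiniteDimensional ℝ E] [Nontrivial E]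

theorem le_of_addHaar_ball_le {x : E} {r : ℝ} {A : ℝ≥0∞} (hA : A ≠ ∞) (h : μ (ball x r) ≤ A) :
    r ≤ (A / μ (ball 0 1)).toReal ^ (finrank ℝ E : ℝ)⁻¹ := by
  have hd : (finrank ℝ E : ℝ) ≠ 0 := Nat.cast_ne_zero.2 finrank_pos.ne'
  rcases le_or_gt r 0 with hr | hr
  · exact hr.trans (by positivity)
  have hunit : μ (ball (0 : E) 1) ≠ 0 := (measure_ball_pos μ 0 one_pos).ne'
  rw [Measure.addHaar_ball μ x hr.le, ← ENNReal.le_div_iff_mul_le (Or.inl hunit)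
    (Or.inl measure_ball_lt_top.ne), ENNReal.ofReal_le_iff_le_toReal (ENNReal.div_ne_top hA hunit),
    ← Real.rpow_natCast] at h
  simpa only [← Real.rpow_mul hr.le, mul_inv_cancel₀ hd, Real.rpow_one] using
    Real.rpow_le_rpow (by positivity) h (inv_nonneg.2 (Nat.cast_nonneg (finrank ℝ E)))

theorem mul_meas_le_of_forall_mul_meas_ball_le {s : Set E} {r : E → ℝ} {c : ℝ≥0∞}
    (hr : ∀ x ∈ s, 0 < r x) (hc : c ≠ ∞)
    (hs : ∀ x ∈ s, c * μ (ball x (r x)) ≤ ∫⁻ y in closedBall x (r x), f y ∂μ) :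
    c * μ s ≤ 5 ^ finrank ℝ E * ∫⁻ y, f y ∂μ := by
  rcases eq_or_ne (∫⁻ y, f y ∂μ) ∞ with htop | hfin
  · simp [htop, ENNReal.mul_top]
  rcases eq_or_ne c 0 with rfl | hc0
  · simp
  have hbound (x : E) (hx : x ∈ s) :
      r x ≤ (((∫⁻ y, f y ∂μ) / c) / μ (ball 0 1)).toReal ^ (finrank ℝ E : ℝ)⁻¹ := by
    refine le_of_addHaar_ball_le (x := x) (ENNReal.div_ne_top hfin hc0) ?_
    rw [ENNReal.le_div_iff_mul_le (Or.inl hc0) (Or.inl hc), mul_comm]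
    exact (hs x hx).trans (setLIntegral_le_lintegral _ _)
  obtain ⟨u, hu, hdisj, hcov⟩ := Vitali.exists_disjoint_subfamily_covering_enlargement_closedBall
    s (fun x => x) r _ hbound 5 (by norm_num)
  have hcount : u.Countable := hdisj.countable_of_nonempty_interior fun x hx =>
    ⟨x, ball_subset_interior_closedBall (mem_ball_self (hr x (hu hx)))⟩
  have hsub : s ⊆ ⋃ z ∈ u, closedBall z (5 * r z) := fun x hx => by
    obtain ⟨z, hz, hxz⟩ := hcov x hx
    exact mem_iUnion₂.2 ⟨z, hz, hxz (mem_closedBall_self (hr x hx).le)⟩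
  have henlarge (z : u) : c * μ (closedBall (z : E) (5 * r z)) ≤
      5 ^ finrank ℝ E * ∫⁻ y in closedBall (z : E) (r z), f y ∂μ := by
    rw [Measure.addHaar_closedBall_mul μ _ (by norm_num) (hr z (hu z.2)).le,
      Measure.addHaar_closedBall_eq_addHaar_ball, ← Measure.addHaar_ball_center μ (z : E),
      mul_left_comm, ENNReal.ofReal_pow (by norm_num), ENNReal.ofReal_ofNat]
    gcongr
    exact hs z (hu z.2)
  calc c * μ s
      ≤ c * ∑' z : u, μ (closedBall (z : E) (5 * r z)) := by
        gcongr
        exact (measure_mono hsub).trans (measure_biUnion_le _ hcount _)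
    _ ≤ ∑' z : u, 5 ^ finrank ℝ E * ∫⁻ y in closedBall (z : E) (r z), f y ∂μ := by
        rw [← ENNReal.tsum_mul_left]
        exact ENNReal.tsum_le_tsum henlarge
    _ = 5 ^ finrank ℝ E * ∫⁻ y in ⋃ z ∈ u, closedBall z (r z), f y ∂μ := by
        rw [ENNReal.tsum_mul_left, lintegral_biUnion hcount
          (fun _ _ => isClosed_closedBall.measurableSet) hdisj]
    _ ≤ 5 ^ finrank ℝ E * ∫⁻ y, f y ∂μ := by
        gcongr
        exact Measure.restrict_le_self

theorem mul_meas_lt_maximalFunction_le (f : E → ℝ≥0∞) (c : ℝ≥0∞) :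
    c * μ {x | c < maximalFunction μ f x} ≤ 5 ^ finrank ℝ E * ∫⁻ y, f y ∂μ := by
  rcases eq_or_ne c ∞ with rfl | hc
  · simp
  have hball (x : E) (hx : c < maximalFunction μ f x) :
      ∃ r > 0, c * μ (ball x r) ≤ ∫⁻ y in closedBall x r, f y ∂μ := by
    simp only [maximalFunction, lt_iSup_iff] at hx
    obtain ⟨r, hr, hcr⟩ := hx
    refine ⟨r, hr, ?_⟩
    rw [setLAverage_eq] at hcr
    exact (ENNReal.mul_le_of_le_div hcr.le).trans (lintegral_mono_set ball_subset_closedBall)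
  choose! r hr hcr using hball
  exact mul_meas_le_of_forall_mul_meas_ball_le hr hc hcr

theorem mul_meas_lt_maximalFunction_le_setLIntegral (hf : Measurable f) (c : ℝ≥0∞) :
    c * μ {x | c < maximalFunction μ f x} ≤
      2 * 5 ^ finrank ℝ E * ∫⁻ y in {y | c < 2 * f y}, f y ∂μ := by
  have hS : MeasurableSet {y | c < 2 * f y} := measurableSet_lt measurable_const (hf.const_mul 2)
  set f₁ : E → ℝ≥0∞ := {y | c < 2 * f y}.indicator f
  have hsplit (y : E) : f y ≤ f₁ y + c / 2 := by
    by_cases hy : c < 2 * f y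
    · exact le_add_right (by simp [f₁, hy])
    · refine le_add_left ?_
      rwa [ENNReal.le_div_iff_mul_le (by simp) (by simp), mul_comm, ← not_lt]
  have hsub : {x | c < maximalFunction μ f x} ⊆ {x | c / 2 < maximalFunction μ f₁ x} := by
    intro x hx
    have hle : maximalFunction μ f x ≤ maximalFunction μ f₁ x + c / 2 :=
      (maximalFunction_mono hsplit x).trans <| (maximalFunction_add_le (hf.indicator hS) x).trans <|
        add_le_add_right (maximalFunction_le_of_le (μ := μ) (fun _ => le_rfl) x) _
    by_contra hcon
    refine (hx.trans_le (hle.trans (add_le_add_left (not_lt.1 hcon) _))).ne ?_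
    rw [ENNReal.add_halves]
  calc c * μ {x | c < maximalFunction μ f x}
      ≤ 2 * (c / 2 * μ {x | c / 2 < maximalFunction μ f₁ x}) := by
        rw [← mul_assoc, ENNReal.mul_div_cancel two_ne_zero ENNReal.ofNat_ne_top]
        gcongr
    _ ≤ 2 * (5 ^ finrank ℝ E * ∫⁻ y, f₁ y ∂μ) :=
        mul_le_mul_right (mul_meas_lt_maximalFunction_le f₁ (c / 2)) 2
    _ = _ := by rw [lintegral_indicator hS, mul_assoc]

theorem lintegral_maximalFunction_rpow_le (hf : Measurable f) {κ : ℝ} (hκ : 1 < κ) :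
    ∫⁻ x, maximalFunction μ f x ^ κ ∂μ ≤
      2 * 5 ^ finrank ℝ E * (ENNReal.ofReal (κ / (κ - 1)) * 2 ^ (κ - 1)) * ∫⁻ x, f x ^ κ ∂μ :=
  lintegral_rpow_le_of_mul_meas_lt_le (measurable_maximalFunction f) hf hκ fun t _ =>
    mul_meas_lt_maximalFunction_le_setLIntegral hf (ENNReal.ofReal t)

end AddHaar

/-- Global log-Hölder continuity of a function `q` with limit `qinf` at infinity, the local and the
decay condition being taken with the same constant `C`. -/
structure IsLogHolder {E : Type*} [NormedAddCommGroup E] (q : E → ℝ) (qinf C : ℝ) : Prop where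
  abs_sub_le : ∀ x y, x ≠ y → |q x - q y| ≤ C / Real.log (Real.exp 1 + 1 / ‖x - y‖)
  abs_sub_limit_le : ∀ x, |q x - qinf| ≤ C / Real.log (Real.exp 1 + ‖x‖)

theorem one_le_log_exp_one_add {s : ℝ} (hs : 0 ≤ s) : 1 ≤ Real.log (Real.exp 1 + s) :=
  (Real.le_log_iff_exp_le (by positivity)).2 (le_add_of_nonneg_right hs)

namespace IsLogHolder

open Filter Topology

variable {E : Type*} [NormedAddCommGroup E] {q : E → ℝ} {qinf C : ℝ}

theorem nonneg (hq : IsLogHolder q qinf C) : 0 ≤ C := by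
  simpa using (abs_nonneg _).trans (hq.abs_sub_limit_le 0)

theorem const (q : ℝ) : IsLogHolder (fun _ : E => q) q 0 where
  abs_sub_le _ _ _ := by simp
  abs_sub_limit_le _ := by simp

theorem div_const (hq : IsLogHolder q qinf C) {c : ℝ} (hc : 0 < c) :
    IsLogHolder (fun x => q x / c) (qinf / c) (C / c) where
  abs_sub_le x y hxy := by
    rw [← sub_div, abs_div, abs_of_pos hc, div_right_comm]
    gcongr
    exact hq.abs_sub_le x y hxy
  abs_sub_limit_le x := by
    rw [← sub_div, abs_div, abs_of_pos hc, div_right_comm]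
    gcongr
    exact hq.abs_sub_limit_le x

theorem abs_sub_le_of_dist_lt (hq : IsLogHolder q qinf C) {x y : E} {R : ℝ} (hxy : dist x y < R) :
    |q x - q y| ≤ C / Real.log (Real.exp 1 + 1 / R) := by
  have hR : 0 < R := dist_nonneg.trans_lt hxy
  have hlog := one_le_log_exp_one_add (one_div_pos.2 hR).le
  have hC := hq.nonneg
  rcases eq_or_ne x y with rfl | hne
  · rw [sub_self, abs_zero]; positivity
  have hpos : 0 < ‖x - y‖ := norm_pos_iff.2 (sub_ne_zero.2 hne)
  refine (hq.abs_sub_le x y hne).trans ?_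
  rw [dist_eq_norm] at hxy
  gcongr

theorem continuous (hq : IsLogHolder q qinf C) : Continuous q := by
  rw [Metric.continuous_iff']
  intro x ε hε
  have hlim : Tendsto (fun R : ℝ => C / Real.log (Real.exp 1 + 1 / R)) (𝓝[>] 0) (𝓝 0) := by
    refine Tendsto.const_div_atTop (Real.tendsto_log_atTop.comp ?_) C
    simp only [one_div]
    exact tendsto_atTop_add_const_left _ _ tendsto_inv_nhdsGT_zero
  obtain ⟨R, hRε, hR⟩ :=
    ((hlim.eventually (gt_mem_nhds hε)).and self_mem_nhdsWithin).exists
  filter_upwards [Metric.ball_mem_nhds x hR] with y hy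
  exact (hq.abs_sub_le_of_dist_lt hy).trans_lt hRε

theorem tendsto_cocompact [ProperSpace E] (hq : IsLogHolder q qinf C) :
    Tendsto q (cocompact E) (𝓝 qinf) := by
  refine tendsto_iff_norm_sub_tendsto_zero.2 (squeeze_zero (fun _ => norm_nonneg _)
    hq.abs_sub_limit_le (Tendsto.const_div_atTop (Real.tendsto_log_atTop.comp ?_) C))
  exact tendsto_atTop_add_const_left _ _ tendsto_norm_cocompact_atTop

theorem limit_mem_Icc [NormedSpace ℝ E] [FiniteDimensional ℝ E] [Nontrivial E]
    (hq : IsLogHolder q qinf C) {l u : ℝ} (h : ∀ x, q x ∈ Icc l u) : qinf ∈ Icc l u := by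
  have := FiniteDimensional.proper_real E
  have := NormedSpace.noncompactSpace ℝ E
  exact isClosed_Icc.mem_of_tendsto hq.tendsto_cocompact (Eventually.of_forall h)

theorem inv (hq : IsLogHolder q qinf C) {l : ℝ} (hl : 0 < l) (hql : ∀ x, l ≤ q x)
    (hqinf : l ≤ qinf) : IsLogHolder (fun x => (q x)⁻¹) qinf⁻¹ (C / l ^ 2) := by
  have hinv (s t : ℝ) (hs : l ≤ s) (ht : l ≤ t) : |s⁻¹ - t⁻¹| ≤ |s - t| / l ^ 2 := by
    have hs0 := hl.trans_le hs
    have ht0 := hl.trans_le ht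
    rw [inv_sub_inv hs0.ne' ht0.ne', abs_div, abs_sub_comm, abs_of_pos (mul_pos hs0 ht0), sq]
    gcongr
  constructor
  · intro x y hxy
    refine (hinv _ _ (hql x) (hql y)).trans ?_
    rw [div_right_comm]
    gcongr
    exact hq.abs_sub_le x y hxy
  · intro x
    refine (hinv _ _ (hql x) hqinf).trans ?_
    rw [div_right_comm]
    gcongr
    exact hq.abs_sub_limit_le x

end IsLogHolder

theorem IsPLog.exists_isLogHolder_one_div {E : Type*} [NormedAddCommGroup E] [MeasurableSpace E]
    {p : E → ℝ} (hp : IsPLog univ p) : ∃ qinf C, IsLogHolder (fun x => 1 / p x) qinf C := by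
  obtain ⟨-, -, C₁, -, C₂, -, pinf, hloc, hinf⟩ := hp
  refine ⟨1 / pinf, max C₁ C₂, fun x y hxy => ?_, fun x => ?_⟩
  · have := one_le_log_exp_one_add (s := 1 / ‖x - y‖) (by positivity)
    refine (hloc x trivial y trivial hxy).trans ?_
    gcongr
    exact le_max_left _ _
  · have := one_le_log_exp_one_add (norm_nonneg x)
    refine (hinf x trivial).trans ?_
    gcongr
    exact le_max_right _ _

theorem IsPLog.continuous {E : Type*} [NormedAddCommGroup E] [MeasurableSpace E]
    {p : E → ℝ} (hp : IsPLog univ p) : Continuous p := by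
  obtain ⟨qinf, C, hq⟩ := hp.exists_isLogHolder_one_div
  have hp0 (x : E) : 1 / p x ≠ 0 := one_div_ne_zero (zero_lt_one.trans_le (hp.2.1 x trivial)).ne'
  simpa only [Pi.inv_def, one_div, inv_inv] using hq.continuous.inv₀ hp0

theorem IsPLog.exists_isLogHolder {E : Type*} [NormedAddCommGroup E] [NormedSpace ℝ E]
    [FiniteDimensional ℝ E] [Nontrivial E] [MeasurableSpace E] {p : E → ℝ} (hp : IsPLog univ p)
    {P : ℝ} (hP : ∀ x, p x ≤ P) : ∃ pinf C, IsLogHolder p pinf C := by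
  obtain ⟨qinf, C, hq⟩ := hp.exists_isLogHolder_one_div
  have hp1 (x : E) : 1 ≤ p x := hp.2.1 x trivial
  have hP0 : 0 < P := zero_lt_one.trans_le ((hp1 0).trans (hP 0))
  have hPq (x : E) : 1 / P ≤ 1 / p x := one_div_le_one_div_of_le (by linarith [hp1 x]) (hP x)
  have hqinf : 1 / P ≤ qinf :=
    (hq.limit_mem_Icc (u := 1) fun x => ⟨hPq x, (div_le_one (by linarith [hp1 x])).2 (hp1 x)⟩).1
  exact ⟨_, _, by simpa using hq.inv (one_div_pos.2 hP0) hPq hqinf⟩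

section VariableMaximal

open Metric Module

theorem laverage_rpow_le_mul {Ω : Type*} [MeasurableSpace Ω] {ν : Measure Ω} [IsFiniteMeasure ν]
    {f g : Ω → ℝ≥0∞} (hf : AEMeasurable f ν) {m q : ℝ} (hm : 1 ≤ m) (hmq : m ≤ q)
    (hfg : ∀ᵐ y ∂ν, f y ^ m ≤ g y) (hg : ∫⁻ y, g y ∂ν ≤ 1) :
    (⨍⁻ y, f y ∂ν) ^ q ≤ (ν univ)⁻¹ ^ (q / m - 1) * ⨍⁻ y, g y ∂ν := by
  have hm0 : 0 < m := zero_lt_one.trans_le hm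
  have he : 0 ≤ q / m - 1 := sub_nonneg.2 ((one_le_div hm0).2 hmq)
  have havg : (⨍⁻ y, f y ∂ν) ^ m ≤ ⨍⁻ y, g y ∂ν :=
    (laverage_rpow_le hf hm).trans (lintegral_mono_ae (Measure.ae_smul_measure hfg _))
  have hvol : ⨍⁻ y, g y ∂ν ≤ (ν univ)⁻¹ := by
    rw [laverage_eq, ENNReal.div_eq_inv_mul]
    exact mul_le_of_le_one_right' hg
  calc (⨍⁻ y, f y ∂ν) ^ q = ((⨍⁻ y, f y ∂ν) ^ m) ^ (q / m) := by
        rw [← ENNReal.rpow_mul, mul_div_cancel₀ _ hm0.ne']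
    _ ≤ (⨍⁻ y, g y ∂ν) ^ (q / m - 1 + 1) := by
        rw [sub_add_cancel]
        exact ENNReal.rpow_le_rpow havg (by linarith)
    _ = (⨍⁻ y, g y ∂ν) ^ (q / m - 1) * ⨍⁻ y, g y ∂ν := by
        rw [ENNReal.rpow_add_of_nonneg _ _ he zero_le_one, ENNReal.rpow_one]
    _ ≤ _ := by gcongr

/-- Changing the exponent of a number in `[0,1]` costs a constant, except where the number is so
small that the power `L ^ (-N)` dominates it. -/
theorem rpow_le_mul_rpow_add_of_decay {t : ℝ≥0∞} (ht : t ≤ 1) {a b C N L : ℝ}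
    (hL : Real.exp 1 ≤ L) (ha : 1 ≤ a) (h : |a - b| ≤ C / Real.log L) (hN : 0 ≤ N) :
    t ^ a ≤ ENNReal.ofReal (Real.exp (N * C)) * t ^ b + ENNReal.ofReal (L ^ (-N)) := by
  have hL0 : 0 < L := (Real.exp_pos 1).trans_le hL
  have hlog : 1 ≤ Real.log L := (Real.le_log_iff_exp_le hL0).2 hL
  lift t to ℝ≥0 using (ht.trans_lt ENNReal.one_lt_top).ne
  rw [ENNReal.coe_le_one_iff] at ht
  rw [← ENNReal.ofReal_coe_nnreal, ENNReal.ofReal_rpow_of_nonneg t.coe_nonneg (by linarith)]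
  rcases lt_or_ge (t : ℝ) (L ^ (-N)) with hsmall | hlarge
  · refine le_add_left (ENNReal.ofReal_le_ofReal (le_trans ?_ hsmall.le))
    exact Real.rpow_le_self_of_le_one t.coe_nonneg ht ha
  · have ht0 : 0 < (t : ℝ) := (Real.rpow_pos_of_pos hL0 _).trans_le hlarge
    have hlogt : |Real.log t| ≤ N * Real.log L := by
      have := Real.log_le_log (Real.rpow_pos_of_pos hL0 _) hlarge
      rw [Real.log_rpow hL0] at this
      rw [abs_of_nonpos (Real.log_nonpos t.coe_nonneg ht)]
      linarith
    have hexp : Real.log t * (a - b) ≤ N * C :=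
      calc Real.log t * (a - b) ≤ |Real.log t| * |a - b| := (le_abs_self _).trans (abs_mul _ _).le
        _ ≤ N * Real.log L * (C / Real.log L) := by gcongr
        _ = N * C := by field_simp
    refine le_add_right ?_
    rw [ENNReal.ofReal_rpow_of_pos ht0, ← ENNReal.ofReal_mul (Real.exp_pos _).le]
    refine ENNReal.ofReal_le_ofReal ?_
    calc (t : ℝ) ^ a = (t : ℝ) ^ (a - b) * (t : ℝ) ^ b := by
          rw [← Real.rpow_add ht0, sub_add_cancel]
      _ ≤ _ := by
          rw [Real.rpow_def_of_pos ht0 (a - b)]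
          gcongr

variable {E : Type*} [NormedAddCommGroup E] [MeasurableSpace E] [BorelSpace E] [NormedSpace ℝ E]
  {μ : Measure E}

theorem lintegral_rpow_le_mul_add_of_decay {g : E → ℝ≥0∞} (hg : ∀ x, g x ≤ 1) {a b : E → ℝ}
    {C : ℝ} (ha : ∀ x, 1 ≤ a x) (h : ∀ x, |a x - b x| ≤ C / Real.log (Real.exp 1 + ‖x‖)) :
    ∫⁻ x, g x ^ a x ∂μ ≤ ENNReal.ofReal (Real.exp ((finrank ℝ E + 1) * C)) * ∫⁻ x, g x ^ b x ∂μ +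
      ∫⁻ x : E, ENNReal.ofReal ((Real.exp 1 + ‖x‖) ^ (-((finrank ℝ E : ℝ) + 1))) ∂μ := by
  rw [← lintegral_const_mul' _ _ ENNReal.ofReal_ne_top, ← lintegral_add_right _ (by fun_prop)]
  exact lintegral_mono fun x => rpow_le_mul_rpow_add_of_decay (hg x)
    (le_add_of_nonneg_right (norm_nonneg x)) (ha x) (h x) (by positivity)

variable [FiniteDimensional ℝ E] [μ.IsAddHaarMeasure]

theorem inv_addHaar_ball_rpow_le (x : E) {R C e A : ℝ} (hR : 0 < R) (he : 0 ≤ e)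
    (heC : e ≤ C / Real.log (Real.exp 1 + 1 / R)) (heA : e ≤ A) :
    (μ (ball x R))⁻¹ ^ e ≤
      ENNReal.ofReal (Real.exp (finrank ℝ E * C)) * (max 1 (μ (ball 0 1))⁻¹) ^ A := by
  set L := Real.exp 1 + 1 / R
  have hlog : 1 ≤ Real.log L := one_le_log_exp_one_add (one_div_pos.2 hR).le
  have hRL : R⁻¹ ≤ L := by
    rw [← one_div]
    exact le_add_of_nonneg_left (Real.exp_pos 1).le
  have hinv : (μ (ball x R))⁻¹ =
      ENNReal.ofReal (R⁻¹ ^ finrank ℝ E) * (μ (ball (0 : E) 1))⁻¹ := by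
    rw [Measure.addHaar_ball_of_pos μ x hR, ENNReal.mul_inv (Or.inr measure_ball_lt_top.ne)
      (Or.inl ENNReal.ofReal_ne_top), ← ENNReal.ofReal_inv_of_pos (by positivity), inv_pow]
  rw [hinv, ENNReal.mul_rpow_of_nonneg _ _ he, ENNReal.ofReal_rpow_of_nonneg (by positivity) he]
  refine mul_le_mul' (ENNReal.ofReal_le_ofReal ?_)
    ((ENNReal.rpow_le_rpow (le_max_right _ _) he).trans
      (ENNReal.rpow_le_rpow_of_exponent_le (le_max_left _ _) heA))
  calc (R⁻¹ ^ finrank ℝ E) ^ e ≤ (L ^ finrank ℝ E) ^ e := by gcongr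
    _ = Real.exp (finrank ℝ E * (Real.log L * e)) := by
        rw [Real.rpow_def_of_pos (pow_pos ((inv_pos.2 hR).trans_le hRL) _), Real.log_pow, mul_assoc]
    _ ≤ Real.exp (finrank ℝ E * C) := by
        gcongr
        rwa [mul_comm, ← le_div_iff₀ (by linarith)]

theorem lintegral_ofReal_exp_one_add_norm_rpow_neg_lt_top :
    ∫⁻ x : E, ENNReal.ofReal ((Real.exp 1 + ‖x‖) ^ (-((finrank ℝ E : ℝ) + 1))) ∂μ < ∞ := by
  have h : Integrable (fun x : E => (1 + ‖x‖) ^ (-((finrank ℝ E : ℝ) + 1))) μ :=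
    integrable_one_add_norm (by simp)
  refine (lintegral_mono fun x => ENNReal.ofReal_le_ofReal ?_).trans_lt h.lintegral_lt_top
  refine Real.rpow_le_rpow_of_nonpos (by positivity) ?_ (neg_nonpos.2 (by positivity))
  gcongr
  exact Real.one_le_exp zero_le_one

namespace IsLogHolder

variable {q : E → ℝ} {qinf C l Q : ℝ}

theorem setLAverage_ball_rpow_le (hq : IsLogHolder q qinf C) (hq1 : ∀ x, 1 ≤ q x)
    {f : E → ℝ≥0∞} (hf : Measurable f) (hf1 : ∀ y, f y = 0 ∨ 1 ≤ f y)
    (hint : ∫⁻ y, f y ^ q y ∂μ ≤ 1) {x : E} (hQ : q x ≤ Q) {R : ℝ} (hR : 0 < R) :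
    (⨍⁻ y in ball x R, f y ∂μ) ^ q x ≤
      ENNReal.ofReal (Real.exp (finrank ℝ E * C)) * (max 1 (μ (ball 0 1))⁻¹) ^ Q *
        ⨍⁻ y in ball x R, f y ^ q y ∂μ := by
  -- `m` is a constant lower bound of the exponent on the ball, within `ω` of `q x`.
  set ω := C / Real.log (Real.exp 1 + 1 / R)
  set m := max 1 (q x - ω)
  have hm1 : 1 ≤ m := le_max_left _ _
  have hm0 : 0 < m := zero_lt_one.trans_le hm1
  have hω : 0 ≤ ω :=
    div_nonneg hq.nonneg (zero_le_one.trans (one_le_log_exp_one_add (one_div_pos.2 hR).le))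
  have hmx : m ≤ q x := max_le (hq1 x) (by linarith)
  have hfm (y : E) (hy : y ∈ ball x R) : f y ^ m ≤ f y ^ q y := by
    have hmy : m ≤ q y :=
      max_le (hq1 y) (by linarith [(abs_le.1 (hq.abs_sub_le_of_dist_lt (mem_ball'.1 hy))).2])
    rcases hf1 y with h0 | h1
    · rw [h0, ENNReal.zero_rpow_of_pos hm0]
      exact zero_le
    · exact ENNReal.rpow_le_rpow_of_exponent_le h1 hmy
  have : IsFiniteMeasure (μ.restrict (ball x R)) := ⟨by simp [measure_ball_lt_top]⟩
  refine (laverage_rpow_le_mul hf.aemeasurable hm1 hmx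
    (ae_restrict_of_forall_mem measurableSet_ball hfm)
    ((setLIntegral_le_lintegral _ _).trans hint)).trans ?_
  rw [Measure.restrict_apply_univ]
  gcongr
  refine inv_addHaar_ball_rpow_le x hR (sub_nonneg.2 ((one_le_div hm0).2 hmx)) ?_ ?_
  · rw [div_sub_one hm0.ne']
    exact (div_le_self (sub_nonneg.2 hmx) hm1).trans (by linarith [le_max_right 1 (q x - ω)])
  · linarith [div_le_self (hm0.le.trans hmx) hm1]

theorem exists_maximalFunction_rpow_le (hq : IsLogHolder q qinf C) (hq1 : ∀ x, 1 ≤ q x)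
    (hQ : ∀ x, q x ≤ Q) : ∃ K : ℝ≥0, ∀ f : E → ℝ≥0∞, Measurable f → (∀ y, f y = 0 ∨ 1 ≤ f y) →
      ∫⁻ y, f y ^ q y ∂μ ≤ 1 → ∀ x,
        maximalFunction μ f x ^ q x ≤ K * maximalFunction μ (fun y => f y ^ q y) x := by
  have : 0 ≤ Q := zero_le_one.trans ((hq1 0).trans (hQ 0))
  have hball : (μ (ball (0 : E) 1))⁻¹ ≠ ∞ := ENNReal.inv_ne_top.2 (measure_ball_pos μ _ one_pos).ne'
  have hK : ENNReal.ofReal (Real.exp (finrank ℝ E * C)) * (max 1 (μ (ball 0 1))⁻¹) ^ Q ≠ ∞ := by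
    finiteness
  refine ⟨_, fun f hf hf1 hint x =>
    le_of_le_of_eq ?_ (congrArg (· * _) (ENNReal.coe_toNNReal hK).symm)⟩
  have hx0 : 0 < q x := zero_lt_one.trans_le (hq1 x)
  rw [← ENNReal.le_rpow_inv_iff hx0]
  refine iSup₂_le fun R hR => ?_
  rw [ENNReal.le_rpow_inv_iff hx0]
  refine (hq.setLAverage_ball_rpow_le hq1 hf hf1 hint (hQ x) hR).trans ?_
  gcongr
  exact setLAverage_le_maximalFunction _ x hR

variable [Nontrivial E]

theorem exists_lintegral_maximalFunction_rpow_le_of_one_le (hq : IsLogHolder q qinf C) (hl : 1 < l)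
    (hlq : ∀ x, l ≤ q x) (hQ : ∀ x, q x ≤ Q) : ∃ K : ℝ≥0, ∀ f : E → ℝ≥0∞, Measurable f →
      (∀ y, f y = 0 ∨ 1 ≤ f y) → ∫⁻ x, f x ^ q x ∂μ ≤ 1 →
        ∫⁻ x, maximalFunction μ f x ^ q x ∂μ ≤ K := by
  have hl0 : 0 < l := by linarith
  have hqm : Measurable q := hq.continuous.measurable
  obtain ⟨K, hK⟩ := (hq.div_const hl0).exists_maximalFunction_rpow_le (μ := μ)
    (fun x => (one_le_div hl0).2 (hlq x)) fun x => div_le_div_of_nonneg_right (hQ x) hl0.le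
  have hmul (x : E) : q x / l * l = q x := div_mul_cancel₀ _ hl0.ne'
  refine ⟨K ^ l * (2 * 5 ^ finrank ℝ E * ((l / (l - 1)).toNNReal * 2 ^ (l - 1))),
    fun f hf hf1 hint => ?_⟩
  have hint' : ∫⁻ y, f y ^ (q y / l) ∂μ ≤ 1 := by
    refine (lintegral_mono fun y => ?_).trans hint
    have hqy : 0 < q y := hl0.trans_le (hlq y)
    rcases hf1 y with h0 | h1
    · rw [h0, ENNReal.zero_rpow_of_pos (div_pos hqy hl0)]
      exact zero_le
    · exact ENNReal.rpow_le_rpow_of_exponent_le h1 (div_le_self hqy.le hl.le)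
  have hpt (x : E) : maximalFunction μ f x ^ q x ≤
      K ^ l * maximalFunction μ (fun y => f y ^ (q y / l)) x ^ l := by
    rw [← ENNReal.mul_rpow_of_nonneg _ _ hl0.le, ← hmul x, ENNReal.rpow_mul]
    exact ENNReal.rpow_le_rpow (hK f hf hf1 hint' x) hl0.le
  have hpow : ∫⁻ x, (f x ^ (q x / l)) ^ l ∂μ ≤ 1 := by
    simpa only [← ENNReal.rpow_mul, hmul] using hint
  calc ∫⁻ x, maximalFunction μ f x ^ q x ∂μ
      ≤ K ^ l * ∫⁻ x, maximalFunction μ (fun y => f y ^ (q y / l)) x ^ l ∂μ := by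
        rw [← lintegral_const_mul' _ _ (ENNReal.rpow_ne_top_of_nonneg hl0.le ENNReal.coe_ne_top)]
        exact lintegral_mono hpt
    _ ≤ K ^ l * (2 * 5 ^ finrank ℝ E * (ENNReal.ofReal (l / (l - 1)) * 2 ^ (l - 1)) * 1) := by
        gcongr
        exact (lintegral_maximalFunction_rpow_le (hf.pow (hqm.div_const l)) hl).trans (by gcongr)
    _ = _ := by
        rw [mul_one]
        push_cast [ENNReal.coe_rpow_of_nonneg _ hl0.le,
          ENNReal.coe_rpow_of_nonneg _ (sub_nonneg.2 hl.le)]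
        rfl

theorem exists_lintegral_maximalFunction_rpow_le_of_le_one (hq : IsLogHolder q qinf C) (hl : 1 < l)
    (hlq : ∀ x, l ≤ q x) (hQ : ∀ x, q x ≤ Q) : ∃ K : ℝ≥0, ∀ f : E → ℝ≥0∞, Measurable f →
      (∀ y, f y ≤ 1) → ∫⁻ x, f x ^ q x ∂μ ≤ 1 → ∫⁻ x, maximalFunction μ f x ^ q x ∂μ ≤ K := by
  have hqinf : 1 < qinf := hl.trans_le (hq.limit_mem_Icc fun x => ⟨hlq x, hQ x⟩).1
  set J := ∫⁻ x : E, ENNReal.ofReal ((Real.exp 1 + ‖x‖) ^ (-((finrank ℝ E : ℝ) + 1))) ∂μ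
  have hJ : J ≠ ∞ := lintegral_ofReal_exp_one_add_norm_rpow_neg_lt_top.ne
  set c := ENNReal.ofReal (Real.exp ((finrank ℝ E + 1) * C))
  set A : ℝ≥0∞ := 2 * 5 ^ finrank ℝ E *
    (ENNReal.ofReal (qinf / (qinf - 1)) * 2 ^ (qinf - 1))
  have hA : A ≠ ∞ := by finiteness
  have hK : c * (A * (c * 1 + J)) + J ≠ ∞ := by finiteness
  refine ⟨_, fun f hf hf1 hint => le_of_le_of_eq ?_ (ENNReal.coe_toNNReal hK).symm⟩
  calc ∫⁻ x, maximalFunction μ f x ^ q x ∂μ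
      ≤ c * ∫⁻ x, maximalFunction μ f x ^ qinf ∂μ + J :=
        lintegral_rpow_le_mul_add_of_decay (fun x => maximalFunction_le_of_le hf1 x)
          (fun x => hl.le.trans (hlq x)) hq.abs_sub_limit_le
    _ ≤ c * (A * ∫⁻ x, f x ^ qinf ∂μ) + J := by
        gcongr
        exact lintegral_maximalFunction_rpow_le hf hqinf
    _ ≤ c * (A * (c * ∫⁻ x, f x ^ q x ∂μ + J)) + J := by
        gcongr
        refine lintegral_rpow_le_mul_add_of_decay hf1 (fun _ => hqinf.le) fun x => ?_
        rw [abs_sub_comm]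
        exact hq.abs_sub_limit_le x
    _ ≤ _ := by gcongr

/-- Diening's theorem in modular form. -/
theorem exists_lintegral_maximalFunction_rpow_le (hq : IsLogHolder q qinf C) (hl : 1 < l)
    (hlq : ∀ x, l ≤ q x) (hQ : ∀ x, q x ≤ Q) : ∃ K : ℝ≥0, ∀ f : E → ℝ≥0∞, Measurable f →
      ∫⁻ x, f x ^ q x ∂μ ≤ 1 → ∫⁻ x, maximalFunction μ f x ^ q x ∂μ ≤ K := by
  obtain ⟨K₁, hK₁⟩ := hq.exists_lintegral_maximalFunction_rpow_le_of_one_le (μ := μ) hl hlq hQ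
  obtain ⟨K₂, hK₂⟩ := hq.exists_lintegral_maximalFunction_rpow_le_of_le_one (μ := μ) hl hlq hQ
  have hQ0 : 0 ≤ Q := by linarith [hlq 0, hQ 0]
  refine ⟨2 ^ Q * (K₁ + K₂), fun f hf hint => ?_⟩
  have hset : MeasurableSet {y | 1 ≤ f y} := measurableSet_le measurable_const hf
  set f₁ := {y | 1 ≤ f y}.indicator f
  set f₂ := {y | 1 ≤ f y}ᶜ.indicator f
  have hle {g : E → ℝ≥0∞} (hg : g ≤ f) : ∫⁻ x, g x ^ q x ∂μ ≤ 1 :=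
    (lintegral_mono fun x => ENNReal.rpow_le_rpow (hg x) (by linarith [hlq x])).trans hint
  have hlarge : ∫⁻ x, maximalFunction μ f₁ x ^ q x ∂μ ≤ K₁ := by
    refine hK₁ f₁ (hf.indicator hset) (fun y => ?_) (hle (indicator_le_self _ f))
    by_cases hy : 1 ≤ f y <;> simp [f₁, hy]
  have hsmall : ∫⁻ x, maximalFunction μ f₂ x ^ q x ∂μ ≤ K₂ := by
    refine hK₂ f₂ (hf.indicator hset.compl) (fun y => ?_) (hle (indicator_le_self _ f))
    by_cases hy : 1 ≤ f y
    · simp [f₂, hy]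
    · simpa [f₂, hy] using (not_le.1 hy).le
  have hsplit (x : E) : maximalFunction μ f x ^ q x ≤
      2 ^ Q * (maximalFunction μ f₁ x ^ q x + maximalFunction μ f₂ x ^ q x) := by
    have hadd : maximalFunction μ f x ≤ maximalFunction μ f₁ x + maximalFunction μ f₂ x := by
      refine le_trans (maximalFunction_mono (fun y => ?_) x)
        (maximalFunction_add_le (hf.indicator hset) x)
      exact (congrFun (indicator_self_add_compl {y | 1 ≤ f y} f) y).ge
    refine (ENNReal.rpow_le_rpow hadd (by linarith [hlq x])).trans
      ((ENNReal.rpow_add_le_mul_rpow_add_rpow _ _ (by linarith [hlq x])).trans ?_)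
    gcongr
    · exact one_le_two
    · linarith [hQ x]
  calc ∫⁻ x, maximalFunction μ f x ^ q x ∂μ
      ≤ 2 ^ Q * (∫⁻ x, maximalFunction μ f₁ x ^ q x ∂μ +
          ∫⁻ x, maximalFunction μ f₂ x ^ q x ∂μ) := by
        rw [← lintegral_add_left ((measurable_maximalFunction f₁).pow hq.continuous.measurable),
          ← lintegral_const_mul' _ _ (by finiteness)]
        exact lintegral_mono hsplit
    _ ≤ 2 ^ Q * (K₁ + K₂) := by gcongr
    _ = _ := by
        push_cast [ENNReal.coe_rpow_of_nonneg _ hQ0]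
        rfl

end IsLogHolder

end VariableMaximal

section RieszPotential

open Metric Module

theorem enorm_rpow_neg_mul_eq_lintegral {F : Type*} [NormedAddCommGroup F] {x y : F} (hxy : x ≠ y)
    (f : F → ℝ≥0∞) {γ : ℝ} (hγ : 0 < γ) : ‖x - y‖ₑ ^ (-γ) * f y = ENNReal.ofReal γ *
      ∫⁻ R in Ioi (0 : ℝ), (ball x R).indicator f y * ENNReal.ofReal (R ^ (-γ - 1)) := by
  have hr : 0 < ‖x - y‖ := norm_pos_iff.2 (sub_ne_zero.2 hxy)
  have hindicator (R : ℝ) : (ball x R).indicator f y * ENNReal.ofReal (R ^ (-γ - 1)) =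
      (Ioi ‖x - y‖).indicator (fun R => f y * ENNReal.ofReal (R ^ (-γ - 1))) R := by
    by_cases h : ‖x - y‖ < R <;> simp [indicator, h, dist_eq_norm, norm_sub_rev y x]
  simp_rw [hindicator]
  rw [setLIntegral_indicator measurableSet_Ioi, Ioi_inter_Ioi, sup_of_le_left hr.le,
    lintegral_const_mul _ (by fun_prop), setLIntegral_Ioi_rpow hγ hr, mul_left_comm,
    ← ENNReal.ofReal_mul hγ.le, mul_div_cancel₀ _ hγ.ne', ← ofReal_norm,
    ENNReal.ofReal_rpow_of_pos hr, mul_comm]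

variable {E : Type*} [NormedAddCommGroup E] [NormedSpace ℝ E] [MeasurableSpace E]

/-- The Riesz potential of order `β` of an `ℝ≥0∞`-valued function, without normalizing constant. -/
def rieszPotential (μ : Measure E) (β : ℝ) (f : E → ℝ≥0∞) (x : E) : ℝ≥0∞ :=
  ∫⁻ y, ‖x - y‖ₑ ^ (β - finrank ℝ E) * f y ∂μ

variable {μ : Measure E} {f g : E → ℝ≥0∞} {β s : ℝ}

theorem rieszPotential_const_mul {c : ℝ≥0∞} (hc : c ≠ ∞) (f : E → ℝ≥0∞) (x : E) :
    rieszPotential μ β (fun y => c * f y) x = c * rieszPotential μ β f x := by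
  simp only [rieszPotential, mul_left_comm _ c, lintegral_const_mul' _ _ hc]

theorem rieszPotential_mono (hfg : ∀ y, f y ≤ g y) (x : E) :
    rieszPotential μ β f x ≤ rieszPotential μ β g x :=
  lintegral_mono fun y => mul_le_mul_right (hfg y) _

variable [FiniteDimensional ℝ E] [μ.IsAddHaarMeasure]

theorem setLIntegral_ball_le_mul_min (hf : Measurable f) (hs : 1 ≤ s)
    (hint : ∫⁻ y, f y ^ s ∂μ ≤ 1) (x : E) {R : ℝ} (hR : 0 < R) :
    ∫⁻ y in ball x R, f y ∂μ ≤
      μ (ball x R) * min (maximalFunction μ f x) ((μ (ball x R))⁻¹ ^ s⁻¹) := by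
  have hs0 : 0 < s := zero_lt_one.trans_le hs
  have : IsFiniteMeasure (μ.restrict (ball x R)) := ⟨by simp [measure_ball_lt_top]⟩
  have hjensen : (⨍⁻ y in ball x R, f y ∂μ) ^ s ≤ (μ (ball x R))⁻¹ := by
    refine (laverage_rpow_le hf.aemeasurable hs).trans ?_
    rw [setLAverage_eq, ENNReal.div_eq_inv_mul]
    exact mul_le_of_le_one_right' ((setLIntegral_le_lintegral _ _).trans hint)
  rw [← measure_mul_setLAverage f measure_ball_lt_top.ne]
  gcongr
  exact le_min (setLAverage_le_maximalFunction f x hR) ((ENNReal.le_rpow_inv_iff hs0).2 hjensen)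

variable [BorelSpace E]

theorem ofReal_rpow_mul_setLIntegral_ball_le (hf : Measurable f) (hs : 1 ≤ s)
    (hint : ∫⁻ y, f y ^ s ∂μ ≤ 1) (x : E) {R : ℝ} (hR : 0 < R) :
    ENNReal.ofReal (R ^ (β - finrank ℝ E - 1)) * ∫⁻ y in ball x R, f y ∂μ ≤
      μ (ball 0 1) * max 1 ((μ (ball 0 1))⁻¹ ^ s⁻¹) *
        min (maximalFunction μ f x * ENNReal.ofReal (R ^ (β - 1)))
          (ENNReal.ofReal (R ^ (-(finrank ℝ E / s - β) - 1))) := by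
  have hpow : ENNReal.ofReal (R ^ (β - finrank ℝ E - 1)) * ENNReal.ofReal (R ^ finrank ℝ E) =
      ENNReal.ofReal (R ^ (β - 1)) := by
    rw [← ENNReal.ofReal_mul (by positivity), ← Real.rpow_natCast, ← Real.rpow_add hR]
    ring_nf
  have hdecay : (μ (ball x R))⁻¹ ^ s⁻¹ * ENNReal.ofReal (R ^ (β - 1)) =
      (μ (ball 0 1))⁻¹ ^ s⁻¹ * ENNReal.ofReal (R ^ (-(finrank ℝ E / s - β) - 1)) := by
    have hs0 : 0 ≤ s⁻¹ := inv_nonneg.2 (zero_le_one.trans hs)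
    rw [Measure.addHaar_ball_of_pos μ x hR, ENNReal.mul_inv (Or.inr measure_ball_lt_top.ne)
      (Or.inl ENNReal.ofReal_ne_top), ← ENNReal.ofReal_inv_of_pos (by positivity),
      ENNReal.mul_rpow_of_nonneg _ _ hs0, ENNReal.ofReal_rpow_of_nonneg (by positivity) hs0,
      mul_right_comm, ← ENNReal.ofReal_mul (by positivity), mul_comm, ← Real.rpow_natCast,
      ← Real.rpow_neg hR.le, ← Real.rpow_mul hR.le, ← Real.rpow_add hR]
    ring_nf
  calc ENNReal.ofReal (R ^ (β - finrank ℝ E - 1)) * ∫⁻ y in ball x R, f y ∂μ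
      ≤ ENNReal.ofReal (R ^ (β - finrank ℝ E - 1)) * (ENNReal.ofReal (R ^ finrank ℝ E) *
          μ (ball 0 1) * min (maximalFunction μ f x) ((μ (ball x R))⁻¹ ^ s⁻¹)) := by
        rw [← Measure.addHaar_ball_of_pos μ x hR]
        gcongr
        exact setLIntegral_ball_le_mul_min hf hs hint x hR
    _ = μ (ball 0 1) * min (maximalFunction μ f x * ENNReal.ofReal (R ^ (β - 1)))
          ((μ (ball 0 1))⁻¹ ^ s⁻¹ * ENNReal.ofReal (R ^ (-(finrank ℝ E / s - β) - 1))) := by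
        rw [← hdecay, ← min_mul_of_nonneg _ _ zero_le, ← hpow]
        ring
    _ ≤ _ := by
        rw [mul_assoc]
        refine mul_le_mul_right ?_ _
        rw [mul_min_of_nonneg _ _ zero_le]
        refine min_le_min ?_ ?_
        · exact le_mul_of_one_le_left' (le_max_left _ _)
        · exact mul_le_mul_left (le_max_right _ _) _

variable [Nontrivial E]

theorem rieszPotential_eq_mul_lintegral (hf : Measurable f) (hβ : β < finrank ℝ E) (x : E) :
    rieszPotential μ β f x = ENNReal.ofReal (finrank ℝ E - β) *
      ∫⁻ R in Ioi (0 : ℝ), ENNReal.ofReal (R ^ (β - finrank ℝ E - 1)) *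
        ∫⁻ y in ball x R, f y ∂μ := by
  have hmeas : Measurable (Function.uncurry fun (y : E) (R : ℝ) =>
      (ball x R).indicator f y * ENNReal.ofReal (R ^ (β - finrank ℝ E - 1))) := by
    have hset : MeasurableSet {z : E × ℝ | dist z.1 x < z.2} :=
      measurableSet_lt (by fun_prop) measurable_snd
    exact ((hf.comp measurable_fst).indicator hset).mul (by fun_prop)
  have hne : ∀ᵐ y ∂μ, y ≠ x := Measure.ae_ne μ x
  calc rieszPotential μ β f x
      = ∫⁻ y, ENNReal.ofReal (finrank ℝ E - β) * (∫⁻ R in Ioi (0 : ℝ),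
          (ball x R).indicator f y * ENNReal.ofReal (R ^ (β - finrank ℝ E - 1))) ∂μ := by
        refine lintegral_congr_ae (hne.mono fun y hy => ?_)
        simpa only [neg_sub] using enorm_rpow_neg_mul_eq_lintegral hy.symm f (sub_pos.2 hβ)
    _ = ENNReal.ofReal (finrank ℝ E - β) * ∫⁻ R in Ioi (0 : ℝ), (∫⁻ y,
          (ball x R).indicator f y * ENNReal.ofReal (R ^ (β - finrank ℝ E - 1)) ∂μ) := by
        rw [lintegral_const_mul' _ _ ENNReal.ofReal_ne_top,
          lintegral_lintegral_swap hmeas.aemeasurable]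
    _ = _ := by
        simp only [lintegral_mul_const' _ _ ENNReal.ofReal_ne_top,
          lintegral_indicator measurableSet_ball, mul_comm (∫⁻ y in _, f y ∂μ)]

/-- Hedberg's inequality. -/
theorem exists_rieszPotential_le_maximalFunction_rpow (hβ : 0 < β) (hs : 1 ≤ s)
    (hβs : β < finrank ℝ E / s) : ∃ C : ℝ≥0, ∀ f : E → ℝ≥0∞, Measurable f →
      ∫⁻ y, f y ^ s ∂μ ≤ 1 → ∀ x,
        rieszPotential μ β f x ≤ C * maximalFunction μ f x ^ (1 - β * s / finrank ℝ E) := by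
  have : 0 < s := zero_lt_one.trans_le hs
  have hd : (0 : ℝ) < finrank ℝ E := Nat.cast_pos.2 finrank_pos
  have hβd : β < finrank ℝ E := hβs.trans_le (div_le_self hd.le hs)
  set b := finrank ℝ E / s - β with hb_def
  have hb : 0 < b := sub_pos.2 hβs
  have hexp : b / (β + b) = 1 - β * s / finrank ℝ E := by
    rw [hb_def, add_sub_cancel, sub_div, div_self (by positivity), div_div_eq_mul_div]
  set V := μ (ball (0 : E) 1) * max 1 ((μ (ball 0 1))⁻¹ ^ s⁻¹)
  have hV : V ≠ ∞ := by
    have : (μ (ball (0 : E) 1))⁻¹ ≠ ∞ := ENNReal.inv_ne_top.2 (measure_ball_pos μ _ one_pos).ne'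
    have := (measure_ball_lt_top (μ := μ) (x := (0 : E)) (r := 1)).ne
    finiteness
  have hC : ENNReal.ofReal (finrank ℝ E - β) * (V * ENNReal.ofReal (1 / β + 1 / b)) ≠ ∞ := by
    finiteness
  refine ⟨_, fun f hf hint x =>
    le_of_le_of_eq ?_ (congrArg (· * _) (ENNReal.coe_toNNReal hC).symm)⟩
  calc rieszPotential μ β f x
      ≤ ENNReal.ofReal (finrank ℝ E - β) * ∫⁻ R in Ioi (0 : ℝ),
          V * min (maximalFunction μ f x * ENNReal.ofReal (R ^ (β - 1)))
            (ENNReal.ofReal (R ^ (-b - 1))) := by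
        rw [rieszPotential_eq_mul_lintegral hf hβd]
        gcongr _ * ?_
        exact setLIntegral_mono' measurableSet_Ioi fun R hR =>
          ofReal_rpow_mul_setLIntegral_ball_le hf hs hint x hR
    _ ≤ ENNReal.ofReal (finrank ℝ E - β) *
          (V * (ENNReal.ofReal (1 / β + 1 / b) * maximalFunction μ f x ^ (b / (β + b)))) := by
        rw [lintegral_const_mul' _ _ hV]
        gcongr
        exact lintegral_min_mul_rpow_le hβ hb _
    _ = _ := by
        rw [hexp]
        ring

end RieszPotential

section LaplaceTransform

open Filter Topology ProbabilityTheory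

/-- `φ` is the Laplace transform of a probability measure on `[0, ∞)`. By Bochner subordination,
`ξ ↦ φ (‖ξ‖ ^ 2)` is then a mixture of Gaussians. -/
def IsLaplaceTransform (φ : ℝ → ℝ) : Prop :=
  ∃ ν : Measure ℝ, IsProbabilityMeasure ν ∧ (∀ᵐ l ∂ν, 0 ≤ l) ∧
    ∀ s, 0 ≤ s → φ s = ∫ l, Real.exp (-l * s) ∂ν

theorem IsLaplaceTransform.exp_neg_mul {a : ℝ} (ha : 0 ≤ a) :
    IsLaplaceTransform fun s => Real.exp (-a * s) :=
  ⟨Measure.dirac a, inferInstance, by simpa [ae_dirac_iff measurableSet_Ici] using ha,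
    fun s _ => by simp⟩

theorem IsLaplaceTransform.mul {φ ψ : ℝ → ℝ} (hφ : IsLaplaceTransform φ)
    (hψ : IsLaplaceTransform ψ) : IsLaplaceTransform fun s => φ s * ψ s := by
  obtain ⟨ν, _, hν, hφ⟩ := hφ
  obtain ⟨ν', _, hν', hψ⟩ := hψ
  refine ⟨ν ∗ ν', inferInstance, ?_, fun s hs => ?_⟩
  · rw [Measure.conv, ae_map_iff (by fun_prop) measurableSet_Ici]
    filter_upwards [Measure.quasiMeasurePreserving_fst.ae hν,
      Measure.quasiMeasurePreserving_snd.ae hν'] with z h h'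
    exact add_nonneg h h'
  · rw [Measure.conv, integral_map (by fun_prop) (by fun_prop)]
    simp only [hφ s hs, hψ s hs, ← integral_prod_mul, neg_add, add_mul, Real.exp_add]

theorem IsLaplaceTransform.pow {φ : ℝ → ℝ} (hφ : IsLaplaceTransform φ) (k : ℕ) :
    IsLaplaceTransform fun s => φ s ^ k := by
  induction k with
  | zero => simpa using IsLaplaceTransform.exp_neg_mul le_rfl
  | succ k ih => simpa only [pow_succ] using ih.mul hφ

theorem IsLaplaceTransform.norm_le_one {φ : ℝ → ℝ} (hφ : IsLaplaceTransform φ) {s : ℝ}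
    (hs : 0 ≤ s) : ‖φ s‖ ≤ 1 := by
  obtain ⟨ν, _, hν, hφ⟩ := hφ
  rw [hφ s hs]
  refine (norm_integral_le_of_norm_le_const (C := 1) (hν.mono fun l hl => ?_)).trans_eq (by simp)
  rw [Real.norm_of_nonneg (Real.exp_pos _).le, Real.exp_le_one_iff, neg_mul]
  exact neg_nonpos.2 (mul_nonneg hl hs)

theorem IsLaplaceTransform.measurable_comp {φ : ℝ → ℝ} (hφ : IsLaplaceTransform φ) {Ω : Type*}
    [MeasurableSpace Ω] {g : Ω → ℝ} (hg : Measurable g) (hg0 : ∀ x, 0 ≤ g x) :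
    Measurable fun x => φ (g x) := by
  obtain ⟨ν, _, -, hφ⟩ := hφ
  simp only [fun x => hφ (g x) (hg0 x)]
  have hmeas : Measurable fun q : Ω × ℝ => Real.exp (-q.2 * g q.1) := by fun_prop
  exact hmeas.stronglyMeasurable.integral_prod_right'.measurable

variable {α : ℝ}

theorem ae_paretoMeasure_le {ε : ℝ} : ∀ᵐ l ∂paretoMeasure ε α, ε ≤ l := by
  rw [paretoMeasure, ae_withDensity_iff (by unfold paretoPDF; fun_prop)]
  exact ae_of_all _ fun l hl => le_of_not_gt fun h => hl (paretoPDF_of_lt h)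

theorem integral_paretoMeasure {ε : ℝ} (hε : 0 < ε) (hα : 0 ≤ α) (g : ℝ → ℝ) :
    ∫ l, g l ∂paretoMeasure ε α = α * ε ^ α * ∫ l in Ioi ε, g l * l ^ (-α - 1) := by
  have hpdf : Measurable (paretoPDF ε α) := (measurable_paretoPDFReal ε α).ennreal_ofReal
  rw [paretoMeasure, integral_withDensity_eq_integral_toReal_smul hpdf
    (ae_of_all _ fun _ => ENNReal.ofReal_lt_top), ← integral_Ici_eq_integral_Ioi,
    ← integral_const_mul, ← integral_indicator measurableSet_Ici]
  refine integral_congr_ae (ae_of_all _ fun l => ?_)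
  by_cases hl : ε ≤ l
  · have hl0 : 0 < l := hε.trans_le hl
    simp only [paretoPDF_of_le hl, smul_eq_mul, indicator_of_mem (mem_Ici.2 hl), neg_add']
    rw [ENNReal.toReal_ofReal (by positivity)]
    ring
  · simp [paretoPDF_of_lt (not_le.1 hl), hl]

theorem one_sub_integral_exp_paretoMeasure {ε s : ℝ} (hε : 0 < ε) (hα : 0 < α) (hs : 0 ≤ s) :
    1 - ∫ l, Real.exp (-l * s) ∂paretoMeasure ε α =
      α * ε ^ α * ∫ l in Ioi ε, (1 - Real.exp (-l * s)) * l ^ (-α - 1) := by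
  have := isProbabilityMeasure_paretoMeasure hε hα
  have hint : Integrable (fun l => Real.exp (-l * s)) (paretoMeasure ε α) :=
    .of_bound (by fun_prop) 1 <| ae_paretoMeasure_le.mono fun l hl => by
      rw [Real.norm_of_nonneg (Real.exp_pos _).le, Real.exp_le_one_iff, neg_mul]
      exact neg_nonpos.2 (mul_nonneg (hε.le.trans hl) hs)
  rw [← integral_paretoMeasure hε hα.le, integral_sub (integrable_const _) hint]
  simp

theorem integrableOn_one_sub_exp_mul_rpow (hα0 : 0 < α) (hα1 : α < 1) {s : ℝ} (hs : 0 ≤ s) :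
    IntegrableOn (fun l : ℝ => (1 - Real.exp (-l * s)) * l ^ (-α - 1)) (Ioi 0) := by
  have hmeas : Measurable fun l : ℝ => (1 - Real.exp (-l * s)) * l ^ (-α - 1) := by fun_prop
  have hnonneg {l : ℝ} (hl : 0 < l) : 0 ≤ (1 - Real.exp (-l * s)) * l ^ (-α - 1) :=
    mul_nonneg (sub_nonneg.2 (Real.exp_le_one_iff.2 (by nlinarith))) (by positivity)
  rw [← Ioc_union_Ioi_eq_Ioi zero_le_one]
  refine IntegrableOn.union ?_ ?_
  · have hdom : IntegrableOn (fun l : ℝ => s * l ^ (-α)) (Ioc 0 1) :=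
      ((intervalIntegrable_iff_integrableOn_Ioc_of_le zero_le_one).1
        (intervalIntegral.intervalIntegrable_rpow' (by linarith))).const_mul s
    refine hdom.mono' hmeas.aestronglyMeasurable
      ((ae_restrict_iff' measurableSet_Ioc).2 (ae_of_all _ fun l hl => ?_))
    rw [Real.norm_of_nonneg (hnonneg hl.1)]
    calc (1 - Real.exp (-l * s)) * l ^ (-α - 1)
        ≤ (s * l) * l ^ (-α - 1) := by
          have := hl.1
          gcongr
          linarith [Real.add_one_le_exp (-l * s)]
      _ = s * l ^ (-α) := by
          rw [mul_assoc, mul_comm l, ← Real.rpow_add_one hl.1.ne', sub_add_cancel]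
  · refine (integrableOn_Ioi_rpow_of_lt (by linarith : -α - 1 < -1) one_pos).mono'
      hmeas.aestronglyMeasurable
      ((ae_restrict_iff' measurableSet_Ioi).2 (ae_of_all _ fun l hl => ?_))
    have hl0 : 0 < l := one_pos.trans hl
    rw [Real.norm_of_nonneg (hnonneg hl0)]
    exact mul_le_of_le_one_left (by positivity) (sub_le_self _ (Real.exp_pos _).le)

theorem integral_one_sub_exp_mul_rpow (hα : α ≠ 0) {s : ℝ} (hs : 0 ≤ s) :
    ∫ l in Ioi (0 : ℝ), (1 - Real.exp (-l * s)) * l ^ (-α - 1) =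
      s ^ α * ∫ l in Ioi (0 : ℝ), (1 - Real.exp (-l)) * l ^ (-α - 1) := by
  rcases hs.eq_or_lt with rfl | hs
  · simp [Real.zero_rpow hα]
  have hscale := integral_comp_mul_left_Ioi (fun l : ℝ => (1 - Real.exp (-l)) * l ^ (-α - 1)) 0 hs
  rw [mul_zero, smul_eq_mul, ← mul_right_inj' (Real.rpow_pos_of_pos hs (α + 1)).ne',
    ← integral_const_mul, ← mul_assoc, Real.rpow_add_one hs.ne', mul_inv_cancel_right₀ hs.ne']
    at hscale
  rw [← hscale]
  refine setIntegral_congr_fun measurableSet_Ioi fun l hl => ?_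
  rw [Real.mul_rpow hs.le (le_of_lt hl), mul_left_comm (_ * s), ← mul_assoc (_ * s),
    ← Real.rpow_add_one hs.ne', ← Real.rpow_add hs, mul_comm s, neg_mul]
  simp

theorem integral_one_sub_exp_mul_rpow_pos (hα0 : 0 < α) (hα1 : α < 1) :
    0 < ∫ l in Ioi (0 : ℝ), (1 - Real.exp (-l)) * l ^ (-α - 1) := by
  have hpos (l : ℝ) (hl : l ∈ Ioi 0) : 0 < (1 - Real.exp (-l)) * l ^ (-α - 1) :=
    mul_pos (sub_pos.2 (Real.exp_lt_one_iff.2 (neg_neg_of_pos hl))) (Real.rpow_pos_of_pos hl _)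
  have hint : IntegrableOn (fun l : ℝ => (1 - Real.exp (-l)) * l ^ (-α - 1)) (Ioi 0) := by
    simpa using integrableOn_one_sub_exp_mul_rpow hα0 hα1 zero_le_one
  rw [setIntegral_pos_iff_support_of_nonneg_ae
    ((ae_restrict_iff' measurableSet_Ioi).2 (ae_of_all _ fun l hl => (hpos l hl).le)) hint,
    inter_eq_self_of_subset_right fun l hl => Function.mem_support.2 (hpos l hl).ne']
  simp

/-- The approximants are powers of Laplace transforms of Pareto laws, i.e. laws of sums of
independent Pareto variables; their limit is the one-sided `α`-stable law. -/
theorem exists_isLaplaceTransform_tendsto_exp_neg_rpow (hα0 : 0 < α) (hα1 : α ≤ 1) {t : ℝ}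
    (ht : 0 < t) : ∃ φ : ℕ → ℝ → ℝ, (∀ k, IsLaplaceTransform (φ k)) ∧
      ∀ s, 0 ≤ s → Tendsto (fun k => φ k s) atTop (𝓝 (Real.exp (-t * s ^ α))) := by
  rcases hα1.eq_or_lt with rfl | hα1
  · exact ⟨fun _ s => Real.exp (-t * s), fun _ => .exp_neg_mul ht.le, fun s _ => by simp⟩
  set c := ∫ l in Ioi (0 : ℝ), (1 - Real.exp (-l)) * l ^ (-α - 1)
  have hc : 0 < c := integral_one_sub_exp_mul_rpow_pos hα0 hα1
  set ε : ℕ → ℝ := fun k => (t / (α * c) / k) ^ α⁻¹ with hε_def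
  have hε : Tendsto ε atTop (𝓝 0) := by
    simpa [Real.zero_rpow (inv_ne_zero hα0.ne')] using
      (tendsto_const_div_atTop_nhds_zero_nat (t / (α * c))).rpow_const
        (Or.inr (inv_nonneg.2 hα0.le))
  have hε0 (k : ℕ) : 0 < ε (k + 1) := by positivity
  set φ : ℕ → ℝ → ℝ := fun k s => ∫ l, Real.exp (-l * s) ∂paretoMeasure (ε k) α
  have hφ (k : ℕ) : IsLaplaceTransform (φ (k + 1)) :=
    ⟨_, isProbabilityMeasure_paretoMeasure (hε0 k) hα0,
      ae_paretoMeasure_le.mono fun l hl => (hε0 k).le.trans hl, fun _ _ => rfl⟩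
  refine ⟨fun k s => φ (k + 1) s ^ (k + 1), fun k => (hφ k).pow _, fun s hs => ?_⟩
  have hscale (k : ℕ) : ((k + 1 : ℕ) : ℝ) * (α * ε (k + 1) ^ α) = t / c := by
    rw [hε_def, ← Real.rpow_mul (by positivity), inv_mul_cancel₀ hα0.ne', Real.rpow_one]
    field_simp
  have hpareto (k : ℕ) : -(t / c) * ∫ l in Ioi (ε (k + 1)), (1 - Real.exp (-l * s)) * l ^ (-α - 1)
      = ((k + 1 : ℕ) : ℝ) * (φ (k + 1) s - 1) := by
    rw [← neg_sub 1 (φ _ s), one_sub_integral_exp_paretoMeasure (hε0 k) hα0 hs, ← hscale k]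
    ring
  have hlim : Tendsto (fun k : ℕ => (k : ℝ) * (φ k s - 1)) atTop (𝓝 (-t * s ^ α)) := by
    have hint := ((aecover_Ioi_of_Ioi (μ := volume) hε).integral_tendsto_of_countably_generated
      (integrableOn_one_sub_exp_mul_rpow hα0 hα1 hs)).comp (tendsto_add_atTop_nat 1)
    have hval : -t * s ^ α = -(t / c) *
        ∫ l in Ioi (0 : ℝ), (1 - Real.exp (-l * s)) * l ^ (-α - 1) := by
      rw [integral_one_sub_exp_mul_rpow hα0.ne' hs, mul_left_comm, neg_mul (t / c),
        div_mul_cancel₀ t hc.ne', mul_comm]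
    rw [hval]
    refine (tendsto_add_atTop_iff_nat 1).1 ((hint.const_mul (-(t / c))).congr fun k => ?_)
    rw [Function.comp, Measure.restrict_restrict_of_subset (Ioi_subset_Ioi (hε0 k).le), hpareto]
  simpa [Function.comp_def] using
    (Real.tendsto_one_add_pow_exp_of_tendsto hlim).comp (tendsto_add_atTop_nat 1)

end LaplaceTransform

section FourierBounds

open Filter Topology Module

variable {V : Type*} [NormedAddCommGroup V] [InnerProductSpace ℝ V] [MeasurableSpace V]
  [BorelSpace V] [FiniteDimensional ℝ V]

theorem integrable_exp_neg_mul_norm_rpow [Nontrivial V] {b p : ℝ} (hb : 0 < b) (hp : 0 < p) :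
    Integrable fun ξ : V => Real.exp (-b * ‖ξ‖ ^ p) := by
  rw [integrable_fun_norm_addHaar volume (f := fun r => Real.exp (-b * r ^ p))]
  refine (integrableOn_rpow_mul_exp_neg_mul_rpow (s := (finrank ℝ V - 1 : ℕ))
    (neg_one_lt_zero.trans_le (Nat.cast_nonneg _)) hp hb).congr_fun
      (fun r _ => ?_) measurableSet_Ioi
  simp [Real.rpow_natCast]

theorem integrable_exp_neg_mul_norm_sq [Nontrivial V] {b : ℝ} (hb : 0 < b) :
    Integrable fun ξ : V => Real.exp (-b * ‖ξ‖ ^ 2) := by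
  simpa only [Real.rpow_two] using integrable_exp_neg_mul_norm_rpow (V := V) hb two_pos

theorem norm_fourierInv_le_of_tendsto {F : ℕ → V → ℂ} {G : V → ℂ} {bound : V → ℝ} {x : V} {K : ℝ}
    (hmeas : ∀ k, AEStronglyMeasurable (F k)) (hbound : ∀ k ξ, ‖F k ξ‖ ≤ bound ξ)
    (hint : Integrable bound) (hlim : ∀ ξ, Tendsto (fun k => F k ξ) atTop (𝓝 (G ξ)))
    (hK : ∀ k, ‖𝓕⁻ (F k) x‖ ≤ K) : ‖𝓕⁻ G x‖ ≤ K := by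
  suffices Tendsto (fun k => 𝓕⁻ (F k) x) atTop (𝓝 (𝓕⁻ G x)) from le_of_tendsto' this.norm hK
  simp only [Real.fourierInv_eq, Circle.smul_def]
  refine tendsto_integral_of_dominated_convergence bound (fun k => ?_) hint
    (fun k => ae_of_all _ fun ξ => ?_) (ae_of_all _ fun ξ => (hlim ξ).const_smul _)
  · exact (continuous_subtype_val.comp (Real.continuous_fourierChar.comp
      (by fun_prop : Continuous fun ξ => inner ℝ ξ x))).aestronglyMeasurable.smul (hmeas k)
  · rw [norm_smul, Circle.norm_coe, one_mul]
    exact hbound k ξ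

theorem norm_fourierInv_gaussian_le {b : ℝ} (hb : 0 < b) {x : V} (hx : x ≠ 0) :
    ‖𝓕⁻ (fun ξ : V => ((Real.exp (-b * ‖ξ‖ ^ 2) : ℝ) : ℂ)) x‖ ≤
      (finrank ℝ V / (2 * Real.pi)) ^ (finrank ℝ V / 2 : ℝ) * ‖x‖ ^ (-(finrank ℝ V : ℝ)) := by
  set d := (finrank ℝ V : ℝ)
  set r := Real.pi ^ 2 * ‖x‖ ^ 2 / b with hr_def
  have hx0 : 0 < ‖x‖ := norm_pos_iff.2 hx
  have : Nontrivial V := ⟨x, 0, hx⟩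
  have hd : 0 < d := Nat.cast_pos.2 finrank_pos
  have : 0 < r := by positivity
  have hnorm : ‖𝓕⁻ (fun ξ : V => ((Real.exp (-b * ‖ξ‖ ^ 2) : ℝ) : ℂ)) x‖ =
      (Real.pi / b) ^ (d / 2) * Real.exp (-r) := by
    have hgauss := fourier_gaussian_innerProductSpace (V := V) (b := b) (by simpa using hb) (-x)
    have hre : (-Real.pi ^ 2 * ‖x‖ ^ 2 / b : ℂ) = ((-r : ℝ) : ℂ) := by
      push_cast [hr_def]
      ring
    simp only [Complex.ofReal_exp, Real.fourierInv_eq_fourier_neg, Complex.ofReal_mul,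
      Complex.ofReal_neg, Complex.ofReal_pow]
    rw [hgauss, norm_neg, hre, norm_mul, ← Complex.ofReal_exp, Complex.norm_real,
      Real.norm_of_nonneg (Real.exp_pos _).le, ← Complex.ofReal_div,
      Complex.norm_cpow_eq_rpow_re_of_pos (by positivity)]
    simp [d]
  have hpow : (Real.pi / b) ^ (d / 2) =
      (d / (2 * Real.pi)) ^ (d / 2) * ‖x‖ ^ (-d) * (r / (d / 2)) ^ (d / 2) := by
    have hx2 : ‖x‖ ^ (-d) = ((‖x‖ ^ 2)⁻¹) ^ (d / 2) := by
      rw [← Real.rpow_natCast, ← Real.rpow_neg hx0.le, ← Real.rpow_mul hx0.le]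
      congr 1
      push_cast
      ring
    rw [hx2, ← Real.mul_rpow (by positivity) (by positivity),
      ← Real.mul_rpow (by positivity) (by positivity), hr_def]
    congr 1
    field_simp
  have hexp : (r / (d / 2)) ^ (d / 2) ≤ Real.exp r := by
    calc (r / (d / 2)) ^ (d / 2) ≤ Real.exp (r / (d / 2)) ^ (d / 2) := by
          gcongr
          linarith [Real.add_one_le_exp (r / (d / 2))]
      _ = Real.exp r := by rw [← Real.exp_mul, div_mul_cancel₀ _ (by positivity)]
  rw [hnorm, hpow, Real.exp_neg]
  refine mul_inv_le_of_le_mul₀ (Real.exp_pos _).le (by positivity) ?_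
  gcongr

theorem IsLaplaceTransform.norm_fourierInv_mul_gaussian_le {φ : ℝ → ℝ} (hφ : IsLaplaceTransform φ)
    {δ : ℝ} (hδ : 0 < δ) {x : V} (hx : x ≠ 0) :
    ‖𝓕⁻ (fun ξ : V => ((φ (‖ξ‖ ^ 2) * Real.exp (-δ * ‖ξ‖ ^ 2) : ℝ) : ℂ)) x‖ ≤
      (finrank ℝ V / (2 * Real.pi)) ^ (finrank ℝ V / 2 : ℝ) * ‖x‖ ^ (-(finrank ℝ V : ℝ)) := by
  have : Nontrivial V := ⟨x, 0, hx⟩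
  obtain ⟨ν, _, hν, hφ_eq⟩ := hφ
  have hmix (ξ : V) : φ (‖ξ‖ ^ 2) * Real.exp (-δ * ‖ξ‖ ^ 2) =
      ∫ l, Real.exp (-(|l| + δ) * ‖ξ‖ ^ 2) ∂ν := by
    rw [hφ_eq _ (sq_nonneg _), ← integral_mul_const]
    refine integral_congr_ae (hν.mono fun l hl => ?_)
    simp only [abs_of_nonneg hl, ← Real.exp_add]
    ring_nf
  have hint : Integrable (Function.uncurry fun (ξ : V) (l : ℝ) =>
      Real.fourierChar (inner ℝ ξ x) • ((Real.exp (-(|l| + δ) * ‖ξ‖ ^ 2) : ℝ) : ℂ))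
      (volume.prod ν) := by
    refine ((integrable_exp_neg_mul_norm_sq hδ).comp_fst ν).mono'
      (Measurable.aestronglyMeasurable ?_) (ae_of_all _ fun z => ?_)
    · have hchar : Continuous fun z : V × ℝ => (Real.fourierChar (inner ℝ z.1 x) : ℂ) :=
        continuous_subtype_val.comp (Real.continuous_fourierChar.comp (by fun_prop))
      have hexp : Measurable fun z : V × ℝ => Real.exp (-(|z.2| + δ) * ‖z.1‖ ^ 2) := by fun_prop
      exact hchar.measurable.smul (Complex.measurable_ofReal.comp hexp)
    · simp only [Function.uncurry, Circle.norm_smul, Complex.norm_real,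
        Real.norm_of_nonneg (Real.exp_pos _).le]
      gcongr
      exact le_add_of_nonneg_left (abs_nonneg _)
  have hfubini : 𝓕⁻ (fun ξ : V => ((φ (‖ξ‖ ^ 2) * Real.exp (-δ * ‖ξ‖ ^ 2) : ℝ) : ℂ)) x =
      ∫ l, 𝓕⁻ (fun ξ : V => ((Real.exp (-(|l| + δ) * ‖ξ‖ ^ 2) : ℝ) : ℂ)) x ∂ν := by
    simp only [Real.fourierInv_eq, hmix]
    rw [← integral_integral_swap hint]
    simp only [Circle.smul_def, integral_smul, integral_complex_ofReal]
  rw [hfubini]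
  refine (norm_integral_le_of_norm_le_const (ae_of_all _ fun l =>
    norm_fourierInv_gaussian_le (add_pos_of_nonneg_of_pos (abs_nonneg l) hδ) hx)).trans_eq ?_
  simp

theorem norm_fourierInv_exp_neg_mul_norm_rpow_le_space {α t : ℝ} (hα0 : 0 < α) (hα1 : α ≤ 1)
    (ht : 0 < t) {x : V} (hx : x ≠ 0) :
    ‖𝓕⁻ (fun ξ : V => ((Real.exp (-t * ‖ξ‖ ^ (2 * α)) : ℝ) : ℂ)) x‖ ≤
      (finrank ℝ V / (2 * Real.pi)) ^ (finrank ℝ V / 2 : ℝ) * ‖x‖ ^ (-(finrank ℝ V : ℝ)) := by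
  have : Nontrivial V := ⟨x, 0, hx⟩
  obtain ⟨φ, hφ, hlim⟩ := exists_isLaplaceTransform_tendsto_exp_neg_rpow hα0 hα1 ht
  have hdamped (j : ℕ) : ‖𝓕⁻ (fun ξ : V => ((Real.exp (-t * ‖ξ‖ ^ (2 * α)) *
      Real.exp (-(1 / ((j : ℝ) + 1)) * ‖ξ‖ ^ 2) : ℝ) : ℂ)) x‖ ≤
      (finrank ℝ V / (2 * Real.pi)) ^ (finrank ℝ V / 2 : ℝ) * ‖x‖ ^ (-(finrank ℝ V : ℝ)) := by
    have hδ : 0 < 1 / ((j : ℝ) + 1) := by positivity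
    refine norm_fourierInv_le_of_tendsto (fun k => ?_) (fun k ξ => ?_)
      (integrable_exp_neg_mul_norm_sq hδ) (fun ξ => ?_)
      fun k => (hφ k).norm_fourierInv_mul_gaussian_le hδ hx
    · have := (hφ k).measurable_comp (g := fun ξ : V => ‖ξ‖ ^ 2) (by fun_prop) fun _ => sq_nonneg _
      exact (Complex.measurable_ofReal.comp (this.mul (by fun_prop))).aestronglyMeasurable
    · rw [Complex.norm_real, norm_mul, Real.norm_of_nonneg (Real.exp_pos _).le]
      exact mul_le_of_le_one_left (Real.exp_pos _).le ((hφ k).norm_le_one (sq_nonneg _))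
    · have := (hlim _ (sq_nonneg ‖ξ‖)).mul_const (Real.exp (-(1 / ((j : ℝ) + 1)) * ‖ξ‖ ^ 2))
      rw [← Real.rpow_natCast_mul (norm_nonneg _)] at this
      exact (Complex.continuous_ofReal.tendsto _).comp (by exact_mod_cast this)
  refine norm_fourierInv_le_of_tendsto (fun j => ?_) (fun j ξ => ?_)
    (integrable_exp_neg_mul_norm_rpow ht (mul_pos two_pos hα0)) (fun ξ => ?_) hdamped
  · fun_prop
  · rw [Complex.norm_real, norm_mul, Real.norm_of_nonneg (Real.exp_pos _).le,
      Real.norm_of_nonneg (Real.exp_pos _).le]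
    refine mul_le_of_le_one_right (Real.exp_pos _).le (Real.exp_le_one_iff.2 ?_)
    rw [neg_mul]
    exact neg_nonpos.2 (by positivity)
  · have := ((Real.continuous_exp.tendsto _).comp
      ((tendsto_one_div_add_atTop_nhds_zero_nat (𝕜 := ℝ)).neg.mul_const (‖ξ‖ ^ 2))).const_mul
      (Real.exp (-t * ‖ξ‖ ^ (2 * α)))
    exact (Complex.continuous_ofReal.tendsto _).comp (by simpa using this)

theorem norm_fourierInv_exp_neg_mul_norm_rpow_le_time {α t : ℝ} (hα0 : 0 < α) (ht : 0 < t)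
    (x : V) : ‖𝓕⁻ (fun ξ : V => ((Real.exp (-t * ‖ξ‖ ^ (2 * α)) : ℝ) : ℂ)) x‖ ≤
      (∫ ξ : V, Real.exp (-‖ξ‖ ^ (2 * α))) * t ^ (-(finrank ℝ V / (2 * α))) := by
  rw [Real.fourierInv_eq]
  refine (norm_integral_le_integral_norm _).trans (le_of_eq ?_)
  have hscale (ξ : V) : ‖Real.fourierChar (inner ℝ ξ x) •
      ((Real.exp (-t * ‖ξ‖ ^ (2 * α)) : ℝ) : ℂ)‖ =
      Real.exp (-‖t ^ (1 / (2 * α)) • ξ‖ ^ (2 * α)) := by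
    rw [Circle.norm_smul, Complex.norm_real, Real.norm_of_nonneg (Real.exp_pos _).le, norm_smul,
      Real.norm_of_nonneg (by positivity), Real.mul_rpow (by positivity) (norm_nonneg _),
      ← Real.rpow_mul ht.le, one_div_mul_cancel (by positivity), Real.rpow_one, neg_mul]
  simp_rw [hscale]
  rw [Measure.integral_comp_smul_of_nonneg volume (fun ξ : V => Real.exp (-‖ξ‖ ^ (2 * α))) _
    (hR := by positivity), smul_eq_mul, mul_comm, ← Real.rpow_natCast, ← Real.rpow_mul ht.le,
    ← Real.rpow_neg ht.le, one_div_mul_eq_div]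

end FourierBounds

section Duhamel

/-- The Duhamel integral of `F`: the mild solution with zero initial value of the fractional heat
equation with source term `F`, the Laplacian being normalised as in `gKer`. -/
def duhamel (n : ℕ) (α : ℝ) (F : ℝ → Rn n → ℝ) (t : ℝ) (x : Rn n) : ℝ :=
  ∫ s in Ioc (0 : ℝ) t, conv n (gKer n α (t - s)) (F s) x

variable {n : ℕ} {α : ℝ}

theorem measurable_gKer (n : ℕ) (α : ℝ) : Measurable (Function.uncurry (gKer n α)) := by
  have hchar : Continuous fun z : (ℝ × Rn n) × Rn n =>
      (Real.fourierChar (inner ℝ z.2 z.1.2) : ℂ) :=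
    continuous_subtype_val.comp (Real.continuous_fourierChar.comp (by fun_prop))
  have hexp : Measurable fun z : (ℝ × Rn n) × Rn n => Real.exp (-z.1.1 * ‖z.2‖ ^ (2 * α)) := by
    fun_prop
  have hint : Measurable fun z : ℝ × Rn n =>
      𝓕⁻ (fun ξ : Rn n => (Real.exp (-z.1 * ‖ξ‖ ^ (2 * α)) : ℂ)) z.2 := by
    simp only [Real.fourierInv_eq]
    exact (hchar.measurable.smul (Complex.measurable_ofReal.comp
      hexp)).stronglyMeasurable.integral_prod_right'.measurable
  exact Complex.measurable_re.comp hint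

theorem enorm_gKer_le_time (hα : 0 < α) {t : ℝ} (ht : 0 < t) (x : Rn n) :
    ‖gKer n α t x‖ₑ ≤ ENNReal.ofReal (∫ ξ : Rn n, Real.exp (-‖ξ‖ ^ (2 * α))) *
      ENNReal.ofReal (t ^ (-(n / (2 * α)))) := by
  have h := norm_fourierInv_exp_neg_mul_norm_rpow_le_time hα ht x
  rw [finrank_euclideanSpace_fin] at h
  rw [Real.enorm_eq_ofReal_abs, ← ENNReal.ofReal_mul' (by positivity)]
  exact ENNReal.ofReal_le_ofReal ((Complex.abs_re_le_norm _).trans h)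

theorem enorm_gKer_le_space (hα0 : 0 < α) (hα1 : α ≤ 1) {t : ℝ} (ht : 0 < t) {x : Rn n}
    (hx : x ≠ 0) : ‖gKer n α t x‖ₑ ≤
      ENNReal.ofReal ((n / (2 * Real.pi)) ^ (n / 2 : ℝ)) * ‖x‖ₑ ^ (-(n : ℝ)) := by
  have h := norm_fourierInv_exp_neg_mul_norm_rpow_le_space hα0 hα1 ht hx
  rw [finrank_euclideanSpace_fin] at h
  rw [Real.enorm_eq_ofReal_abs, ← ofReal_norm, ENNReal.ofReal_rpow_of_pos (norm_pos_iff.2 hx),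
    ← ENNReal.ofReal_mul' (by positivity)]
  exact ENNReal.ofReal_le_ofReal ((Complex.abs_re_le_norm _).trans h)

theorem exists_lintegral_enorm_gKer_le (hα0 : 0 < α) (hα1 : α ≤ 1) (hαn : 2 * α < n) :
    ∃ C : ℝ≥0, ∀ x : Rn n, x ≠ 0 →
      ∫⁻ t in Ioi (0 : ℝ), ‖gKer n α t x‖ₑ ≤ C * ‖x‖ₑ ^ (2 * α - n) := by
  set c := max (ENNReal.ofReal (∫ ξ : Rn n, Real.exp (-‖ξ‖ ^ (2 * α))))
    (ENNReal.ofReal ((n / (2 * Real.pi)) ^ (n / 2 : ℝ)))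
  have hn : (0 : ℝ) < n := by linarith
  have hb : 0 < n / (2 * α) - 1 := by rwa [sub_pos, one_lt_div (by positivity)]
  have hbound : ∀ x : Rn n, x ≠ 0 → ∀ t ∈ Ioi (0 : ℝ), ‖gKer n α t x‖ₑ ≤
      c * min (‖x‖ₑ ^ (-(n : ℝ)) * ENNReal.ofReal (t ^ ((1 : ℝ) - 1)))
        (ENNReal.ofReal (t ^ (-(n / (2 * α) - 1) - 1))) := by
    intro x hx t ht
    rw [sub_self, Real.rpow_zero, ENNReal.ofReal_one, mul_one, mul_min]
    refine le_min ((enorm_gKer_le_space hα0 hα1 ht hx).trans ?_)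
      ((enorm_gKer_le_time hα0 ht x).trans ?_)
    · gcongr
      exact le_max_right _ _
    · rw [neg_sub, sub_sub_cancel_left]
      gcongr
      exact le_max_left _ _
  have hc : c * ENNReal.ofReal (1 / 1 + 1 / (n / (2 * α) - 1)) ≠ ∞ := by finiteness
  refine ⟨_, fun x hx => le_of_le_of_eq ?_
    (congrArg (· * ‖x‖ₑ ^ (2 * α - n)) (ENNReal.coe_toNNReal hc).symm)⟩
  calc ∫⁻ t in Ioi (0 : ℝ), ‖gKer n α t x‖ₑ
      ≤ ∫⁻ t in Ioi (0 : ℝ), c * min (‖x‖ₑ ^ (-(n : ℝ)) * ENNReal.ofReal (t ^ ((1 : ℝ) - 1)))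
          (ENNReal.ofReal (t ^ (-(n / (2 * α) - 1) - 1))) :=
        setLIntegral_mono' measurableSet_Ioi (hbound x hx)
    _ ≤ c * (ENNReal.ofReal (1 / 1 + 1 / (n / (2 * α) - 1)) *
          (‖x‖ₑ ^ (-(n : ℝ))) ^ ((n / (2 * α) - 1) / (1 + (n / (2 * α) - 1)))) := by
        rw [lintegral_const_mul' _ _ (by finiteness)]
        gcongr
        exact lintegral_min_mul_rpow_le one_pos hb _
    _ = c * ENNReal.ofReal (1 / 1 + 1 / (n / (2 * α) - 1)) * ‖x‖ₑ ^ (2 * α - n) := by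
        rw [← ENNReal.rpow_mul, mul_assoc]
        congr 3
        rw [add_sub_cancel, sub_div, div_self (by positivity), one_div_div]
        field_simp
        ring

theorem enorm_duhamel_le {E : Type*} [NormedAddCommGroup E] [MeasurableSpace E] [BorelSpace E]
    [SecondCountableTopology E] {μ : Measure E} [SFinite μ] {k F : ℝ → E → ℝ}
    (hk : Measurable (Function.uncurry k)) (hF : Measurable (Function.uncurry F)) {G : E → ℝ≥0∞}
    (hFG : ∀ y, ∀ᵐ s ∂volume.restrict (Ioi (0 : ℝ)), ‖F s y‖ₑ ≤ G y) (t : ℝ) (x : E) :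
    ‖∫ s in Ioc (0 : ℝ) t, ∫ y, k (t - s) (x - y) * F s y ∂μ‖ₑ ≤
      ∫⁻ y, (∫⁻ s in Ioi (0 : ℝ), ‖k s (x - y)‖ₑ) * G y ∂μ := by
  have hk' : Measurable fun z : ℝ × E => ‖k (t - z.1) (x - z.2)‖ₑ :=
    (hk.comp (f := fun z : ℝ × E => (t - z.1, x - z.2)) (by fun_prop)).enorm
  have hky (y : E) : Measurable fun s => ‖k (t - s) (x - y)‖ₑ := hk'.comp measurable_prodMk_right
  calc ‖∫ s in Ioc (0 : ℝ) t, ∫ y, k (t - s) (x - y) * F s y ∂μ‖ₑ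
      ≤ ∫⁻ s in Ioc (0 : ℝ) t, ∫⁻ y, ‖k (t - s) (x - y)‖ₑ * ‖F s y‖ₑ ∂μ := by
        refine (enorm_integral_le_lintegral_enorm _).trans (lintegral_mono fun s => ?_)
        simp only [← enorm_mul]
        exact enorm_integral_le_lintegral_enorm _
    _ = ∫⁻ y, (∫⁻ s in Ioo (0 : ℝ) t, ‖k (t - s) (x - y)‖ₑ * ‖F s y‖ₑ) ∂μ := by
        rw [← setLIntegral_congr Ioo_ae_eq_Ioc]
        exact lintegral_lintegral_swap (hk'.mul hF.enorm).aemeasurable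
    _ ≤ ∫⁻ y, (∫⁻ s in Ioo (0 : ℝ) t, ‖k (t - s) (x - y)‖ₑ) * G y ∂μ := by
        gcongr with y
        rw [← lintegral_mul_const _ (hky y)]
        refine lintegral_mono_ae ?_
        filter_upwards [ae_restrict_of_ae_restrict_of_subset Ioo_subset_Ioi_self (hFG y)] with s hs
        gcongr
    _ ≤ ∫⁻ y, (∫⁻ s in Ioi (0 : ℝ), ‖k s (x - y)‖ₑ) * G y ∂μ := by
        refine lintegral_mono fun y => mul_le_mul_left ?_ _
        calc ∫⁻ s in Ioo (0 : ℝ) t, ‖k (t - s) (x - y)‖ₑ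
            ≤ ∫⁻ s in (t - ·) ⁻¹' Ioi 0, ‖k (t - s) (x - y)‖ₑ :=
              lintegral_mono_set fun s hs => mem_Ioi.2 (sub_pos.2 hs.2)
          _ = ∫⁻ s in Ioi (0 : ℝ), ‖k s (x - y)‖ₑ :=
              (Measure.measurePreserving_sub_left volume t).setLIntegral_comp_preimage
                measurableSet_Ioi (hk.comp measurable_prodMk_right).enorm

theorem timeSup_le_iff {u : ℝ → Rn n → ℝ} {x : Rn n} {a : ℝ≥0∞} :
    timeSup n u x ≤ a ↔ ∀ᵐ t ∂volume.restrict (Ioi (0 : ℝ)), ‖u t x‖ₑ ≤ a := by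
  simp only [Real.enorm_eq_ofReal_abs]
  exact ⟨fun h => (ENNReal.ae_le_essSup _).mono fun _ ht => ht.trans h, essSup_le_of_ae_le _⟩

theorem measurable_timeSup {u : ℝ → Rn n → ℝ} (hu : Measurable (Function.uncurry u)) :
    Measurable (timeSup n u) := by
  refine measurable_of_Iic fun a => ?_
  have hs : MeasurableSet {z : ℝ × Rn n | ¬ ‖u z.1 z.2‖ₑ ≤ a} :=
    (measurableSet_le hu.enorm measurable_const).compl
  have h := measurable_measure_prodMk_right (μ := volume.restrict (Ioi (0 : ℝ))) hs
  convert h (measurableSet_singleton 0) using 1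
  ext x
  exact timeSup_le_iff.trans ae_iff

theorem exists_timeSup_duhamel_le (hα0 : 0 < α) (hα1 : α ≤ 1) (hαn : 2 * α < n) :
    ∃ C : ℝ≥0, ∀ F : ℝ → Rn n → ℝ, Measurable (Function.uncurry F) → ∀ x,
      timeSup n (duhamel n α F) x ≤ C * rieszPotential volume (2 * α) (timeSup n F) x := by
  have : NeZero n := ⟨by rintro rfl; norm_num at hαn; linarith⟩
  obtain ⟨C, hC⟩ := exists_lintegral_enorm_gKer_le hα0 hα1 hαn
  refine ⟨C, fun F hF x => timeSup_le_iff.2 (ae_of_all _ fun t => ?_)⟩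
  refine (enorm_duhamel_le (measurable_gKer n α) hF (fun y => timeSup_le_iff.1 le_rfl) t x).trans ?_
  rw [rieszPotential, ← lintegral_const_mul' _ _ ENNReal.coe_ne_top, finrank_euclideanSpace_fin]
  have hne : ∀ᵐ y : Rn n, y ≠ x := compl_mem_ae_iff.2 (measure_singleton x)
  refine lintegral_mono_ae (hne.mono fun y hy => ?_)
  rw [← mul_assoc]
  gcongr
  exact hC _ (sub_ne_zero.2 hy.symm)

end Duhamel

section LuxNorm

open Filter Topology

variable {Ω : Type*} [MeasurableSpace Ω] {μ : Measure Ω} {p : Ω → ℝ} {f g : Ω → ℝ≥0∞}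

theorem lintegral_div_rpow_le_one_of_luxNorm_lt (hp : ∀ x, 0 ≤ p x) {l : ℝ≥0∞}
    (h : luxNorm μ p f < l) : ∫⁻ x, (f x / l) ^ p x ∂μ ≤ 1 := by
  obtain ⟨l', ⟨-, hl'⟩, hlt⟩ := sInf_lt_iff.1 h
  refine (lintegral_mono fun x => ?_).trans hl'
  exact ENNReal.rpow_le_rpow (ENNReal.div_le_div_left hlt.le _) (hp x)

theorem luxNorm_mono (hp : ∀ x, 0 ≤ p x) (hfg : ∀ x, f x ≤ g x) :
    luxNorm μ p f ≤ luxNorm μ p g := by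
  refine sInf_le_sInf fun l ⟨hl0, hl⟩ => ⟨hl0, (lintegral_mono fun x => ?_).trans hl⟩
  exact ENNReal.rpow_le_rpow (ENNReal.div_le_div_right (hfg x) _) (hp x)

theorem luxNorm_le_max_one (hp : ∀ x, 1 ≤ p x) {K : ℝ≥0∞}
    (hf : ∫⁻ x, f x ^ p x ∂μ ≤ K) : luxNorm μ p f ≤ max 1 K := by
  have hA1 : 1 ≤ max 1 K := le_max_left _ _
  have hA0 : max 1 K ≠ 0 := (one_pos.trans_le hA1).ne'
  refine sInf_le ⟨pos_iff_ne_zero.2 hA0, ?_⟩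
  calc ∫⁻ x, (f x / max 1 K) ^ p x ∂μ ≤ ∫⁻ x, (max 1 K)⁻¹ * f x ^ p x ∂μ := by
        refine lintegral_mono fun x => ?_
        rw [ENNReal.div_eq_inv_mul, ENNReal.mul_rpow_of_nonneg _ _ (zero_le_one.trans (hp x))]
        gcongr
        simpa using ENNReal.rpow_le_rpow_of_exponent_ge (ENNReal.inv_le_one.2 hA1) (hp x)
    _ = (max 1 K)⁻¹ * ∫⁻ x, f x ^ p x ∂μ := lintegral_const_mul' _ _ (ENNReal.inv_ne_top.2 hA0)
    _ ≤ (max 1 K)⁻¹ * max 1 K := by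
        gcongr
        exact hf.trans (le_max_right _ _)
    _ ≤ 1 := ENNReal.inv_mul_le_one _

theorem luxNorm_const_mul_le {c : ℝ≥0∞} (hc0 : c ≠ 0) (hc : c ≠ ∞) (f : Ω → ℝ≥0∞) :
    luxNorm μ p (fun x => c * f x) ≤ c * luxNorm μ p f := by
  rw [← ENNReal.div_le_iff' hc0 hc]
  refine le_sInf fun l ⟨hl0, hl⟩ => (ENNReal.div_le_iff' hc0 hc).2 (sInf_le ?_)
  refine ⟨ENNReal.mul_pos hc0 hl0.ne', ?_⟩
  simpa only [ENNReal.mul_div_mul_left _ _ hc0 hc] using hl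

theorem le_mul_rpow_of_forall_lt {A C N : ℝ≥0∞} (hC : C ≠ ∞) (hN : N ≠ ∞) {a : ℝ}
    (h : ∀ l, N < l → l ≠ ∞ → A ≤ C * l ^ a) : A ≤ C * N ^ a := by
  have hcont : Continuous fun l : ℝ≥0∞ => C * l ^ a :=
    (ENNReal.continuous_const_mul hC).comp ENNReal.continuous_rpow_const
  have : (𝓝[>] N).NeBot := nhdsGT_neBot_of_exists_gt ⟨∞, hN.lt_top⟩
  refine ge_of_tendsto ((hcont.tendsto N).mono_left (nhdsWithin_le_nhds (s := Ioi N))) ?_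
  filter_upwards [Ioo_mem_nhdsGT hN.lt_top] with l hl
  exact h l hl.1 hl.2.ne

end LuxNorm

section MixedEstimate

open Module

variable {E : Type*} [NormedAddCommGroup E] [NormedSpace ℝ E] [FiniteDimensional ℝ E]
  [Nontrivial E] [MeasurableSpace E] [BorelSpace E] {μ : Measure E} [μ.IsAddHaarMeasure]
  {q : E → ℝ} {qinf C l Q β γ : ℝ}

-- Hedberg's inequality bounds the Riesz potential by the power `1 - β * s / d` of the maximal
-- function, `d` being the dimension; this power is `1 / γ` exactly when `s = d * (γ - 1) / β / γ`.
theorem exists_luxNorm_rieszPotential_le (hq : IsLogHolder q qinf C) (hγ : 1 < γ) (hγl : γ < l)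
    (hlq : ∀ x, l ≤ q x) (hQ : ∀ x, q x ≤ Q) (hβ : 0 < β)
    (hβγ : β * γ < finrank ℝ E * (γ - 1)) :
    ∃ K : ℝ≥0, ∀ f : E → ℝ≥0∞, Measurable f → ∫⁻ x, f x ^ (q x / γ) ∂μ ≤ 1 →
      ∫⁻ x, f x ^ (finrank ℝ E * (γ - 1) / β / γ) ∂μ ≤ 1 →
        luxNorm μ q (rieszPotential μ β f) ≤ K := by
  have hγ0 : 0 < γ := zero_lt_one.trans hγ
  have hd : (0 : ℝ) < finrank ℝ E := Nat.cast_pos.2 finrank_pos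
  have hγ1 : 0 < γ - 1 := sub_pos.2 hγ
  have hs : 1 ≤ finrank ℝ E * (γ - 1) / β / γ := by
    rw [div_div, one_le_div (by positivity)]
    exact hβγ.le
  have hβs : β < finrank ℝ E / (finrank ℝ E * (γ - 1) / β / γ) := by
    rw [div_div, div_div_eq_mul_div, mul_div_mul_left _ _ hd.ne', lt_div_iff₀ hγ1]
    gcongr
    linarith
  have hexp : 1 - β * (finrank ℝ E * (γ - 1) / β / γ) / finrank ℝ E = 1 / γ := by
    field_simp
    ring
  obtain ⟨C₀, hC₀⟩ := exists_rieszPotential_le_maximalFunction_rpow (μ := μ) hβ hs hβs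
  obtain ⟨K₀, hK₀⟩ := (hq.div_const hγ0).exists_lintegral_maximalFunction_rpow_le (μ := μ)
    ((one_lt_div hγ0).2 hγl) (fun x => div_le_div_of_nonneg_right (hlq x) hγ0.le)
    fun x => div_le_div_of_nonneg_right (hQ x) hγ0.le
  have hq1 (x : E) : 1 ≤ q x := by linarith [hlq x]
  refine ⟨max 1 C₀ * max 1 K₀, fun f hf hfq hfs => ?_⟩
  have hpoint (x : E) : rieszPotential μ β f x ≤
      (max 1 C₀ : ℝ≥0) * maximalFunction μ f x ^ (1 / γ) := by
    refine (hC₀ f hf hfs x).trans ?_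
    rw [hexp]
    gcongr
    exact le_max_right _ _
  have hmod : ∫⁻ x, (maximalFunction μ f x ^ (1 / γ)) ^ q x ∂μ ≤ K₀ := by
    simpa only [← ENNReal.rpow_mul, one_div_mul_eq_div] using hK₀ f hf hfq
  calc luxNorm μ q (rieszPotential μ β f)
      ≤ luxNorm μ q fun x => (max 1 C₀ : ℝ≥0) * maximalFunction μ f x ^ (1 / γ) :=
        luxNorm_mono (fun x => zero_le_one.trans (hq1 x)) hpoint
    _ ≤ (max 1 C₀ : ℝ≥0) * luxNorm μ q fun x => maximalFunction μ f x ^ (1 / γ) :=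
        luxNorm_const_mul_le (by simp) ENNReal.coe_ne_top _
    _ ≤ (max 1 C₀ * max 1 K₀ : ℝ≥0) := by
        push_cast
        gcongr
        exact luxNorm_le_max_one hq1 hmod

theorem exists_luxNorm_rieszPotential_rpow_le (hq : IsLogHolder q qinf C) (hγ : 1 < γ)
    (hγl : γ < l) (hlq : ∀ x, l ≤ q x) (hQ : ∀ x, q x ≤ Q) (hβ : 0 < β)
    (hβγ : β * γ < finrank ℝ E * (γ - 1)) :
    ∃ K : ℝ≥0, ∀ U : E → ℝ≥0∞, Measurable U →
      luxNorm μ q (rieszPotential μ β fun x => U x ^ γ) ≤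
        K * max (luxNorm μ q U) (luxNorm μ (fun _ => finrank ℝ E * (γ - 1) / β) U) ^ γ := by
  obtain ⟨K, hK⟩ := exists_luxNorm_rieszPotential_le (μ := μ) hq hγ hγl hlq hQ hβ hβγ
  have hγ0 : 0 < γ := zero_lt_one.trans hγ
  refine ⟨max 1 K, fun U hU => ?_⟩
  set N := max (luxNorm μ q U) (luxNorm μ (fun _ => finrank ℝ E * (γ - 1) / β) U)
  rcases eq_or_ne N ∞ with hN | hN
  · rw [hN, ENNReal.top_rpow_of_pos hγ0, ENNReal.mul_top (by simp)]
    exact le_top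
  refine le_mul_rpow_of_forall_lt ENNReal.coe_ne_top hN fun l' hNl hl' => ?_
  have hl0 : l' ≠ 0 := (zero_le.trans_lt hNl).ne'
  have hlγ : l' ^ γ ≠ ∞ := ENNReal.rpow_ne_top_of_nonneg hγ0.le hl'
  set f : E → ℝ≥0∞ := fun x => (U x / l') ^ γ
  have hf (a : ℝ) (x : E) : f x ^ (a / γ) = (U x / l') ^ a := by
    rw [← ENNReal.rpow_mul, mul_div_cancel₀ _ hγ0.ne']
  have hUf : rieszPotential μ β (fun x => U x ^ γ) = fun x => l' ^ γ * rieszPotential μ β f x := by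
    ext x
    rw [← rieszPotential_const_mul hlγ]
    congr 1 with y
    rw [← ENNReal.mul_rpow_of_nonneg _ _ hγ0.le, ENNReal.mul_div_cancel hl0 hl']
  have hbound : luxNorm μ q (rieszPotential μ β f) ≤ K := by
    refine hK f ((hU.div_const l').pow_const γ) ?_ ?_ <;> simp only [hf]
    · exact lintegral_div_rpow_le_one_of_luxNorm_lt (fun x => by linarith [hlq x])
        ((le_max_left _ _).trans_lt hNl)
    · refine lintegral_div_rpow_le_one_of_luxNorm_lt (fun _ => ?_) ((le_max_right _ _).trans_lt hNl)
      exact div_nonneg (mul_nonneg (Nat.cast_nonneg _) (sub_pos.2 hγ).le) hβ.le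
  rw [hUf, mul_comm]
  refine (luxNorm_const_mul_le (by simp [hl0, hl']) hlγ _).trans ?_
  gcongr
  exact hbound.trans (by simp)

end MixedEstimate

section NonlinearEstimate

variable {n : ℕ} {α b : ℝ}

theorem timeSup_abs_rpow_mul_self_le (hb : 0 < b) (u : ℝ → Rn n → ℝ) (x : Rn n) :
    timeSup n (fun t x => |u t x| ^ b * u t x) x ≤ timeSup n u x ^ (b + 1) := by
  have hu : ∀ᵐ t ∂volume.restrict (Ioi (0 : ℝ)), ‖u t x‖ₑ ≤ timeSup n u x :=
    timeSup_le_iff.1 le_rfl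
  refine timeSup_le_iff.2 (hu.mono fun t ht => ?_)
  calc ‖|u t x| ^ b * u t x‖ₑ = ‖u t x‖ₑ ^ (b + 1) := by
        rw [enorm_mul, Real.enorm_rpow_of_nonneg (abs_nonneg _) hb.le, Real.enorm_abs,
          ENNReal.rpow_add_of_nonneg _ _ hb.le zero_le_one, ENNReal.rpow_one]
    _ ≤ timeSup n u x ^ (b + 1) := by gcongr

theorem exists_luxNorm_timeSup_duhamel_le (hb : 0 < b) (hα0 : 0 < α) (hα1 : α ≤ 1)
    (hnb : 2 * α * (b + 1) < n * b) {q : Rn n → ℝ} {qinf C l Q : ℝ} (hq : IsLogHolder q qinf C)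
    (hbl : b + 1 < l) (hlq : ∀ x, l ≤ q x) (hQ : ∀ x, q x ≤ Q) :
    ∃ K : ℝ≥0, ∀ u : ℝ → Rn n → ℝ, Measurable (Function.uncurry u) →
      luxNorm volume q (timeSup n (duhamel n α fun t x => |u t x| ^ b * u t x)) ≤
        K * mixedN n q (n * b / (2 * α)) u ^ (b + 1) := by
  have hαn : 2 * α < n := by nlinarith
  have : NeZero n := ⟨by rintro rfl; norm_num at hαn; linarith⟩
  obtain ⟨C₀, hC₀⟩ := exists_timeSup_duhamel_le hα0 hα1 hαn
  obtain ⟨K, hK⟩ := exists_luxNorm_rieszPotential_rpow_le (μ := volume) (β := 2 * α) hq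
    (by linarith) hbl hlq hQ (by positivity) (by simpa using hnb)
  simp only [finrank_euclideanSpace_fin, add_sub_cancel_right] at hK
  refine ⟨max 1 C₀ * K, fun u hu => ?_⟩
  have hF : Measurable (Function.uncurry fun t x => |u t x| ^ b * u t x) :=
    (hu.abs.pow_const b).mul hu
  have hpoint (x : Rn n) : timeSup n (duhamel n α fun t x => |u t x| ^ b * u t x) x ≤
      (max 1 C₀ : ℝ≥0) * rieszPotential volume (2 * α) (fun y => timeSup n u y ^ (b + 1)) x := by
    refine (hC₀ _ hF x).trans ?_
    gcongr
    · exact le_max_right _ _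
    · exact rieszPotential_mono (timeSup_abs_rpow_mul_self_le hb u) x
  calc luxNorm volume q (timeSup n (duhamel n α fun t x => |u t x| ^ b * u t x))
      ≤ luxNorm volume q fun x => (max 1 C₀ : ℝ≥0) *
          rieszPotential volume (2 * α) (fun y => timeSup n u y ^ (b + 1)) x :=
        luxNorm_mono (fun x => by linarith [hlq x]) hpoint
    _ ≤ (max 1 C₀ : ℝ≥0) *
          luxNorm volume q (rieszPotential volume (2 * α) fun y => timeSup n u y ^ (b + 1)) :=
        luxNorm_const_mul_le (by simp) ENNReal.coe_ne_top _
    _ ≤ (max 1 C₀ : ℝ≥0) * (K * mixedN n q (n * b / (2 * α)) u ^ (b + 1)) := by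
        gcongr
        exact hK _ (measurable_timeSup hu)
    _ = (max 1 C₀ * K : ℝ≥0) * mixedN n q (n * b / (2 * α)) u ^ (b + 1) := by
        rw [ENNReal.coe_mul, mul_assoc]

end NonlinearEstimate

theorem forall_le_of_ae_le {X : Type*} [TopologicalSpace X] [MeasurableSpace X] {μ : Measure X}
    [μ.IsOpenPosMeasure] {f g : X → ℝ} (hf : Continuous f) (hg : Continuous g)
    (h : ∀ᵐ x ∂μ, f x ≤ g x) (x : X) : f x ≤ g x := by
  have hclosure : closure {x | f x ≤ g x} = univ := (Measure.dense_of_ae h).closure_eq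
  rw [(isClosed_le hf hg).closure_eq] at hclosure
  exact hclosure.ge (mem_univ x)

theorem stmt9_general (n : ℕ) (b : ℝ) (hb : 0 < b) (α : ℝ) (hα0 : 0 < α) (hα1 : α ≤ 1)
    (hnb : 2 * α * (b + 1) < n * b) (p : Rn n → ℝ) (hplog : IsPLog univ p)
    (hpminus : ∃ pm : ℝ, b + 1 < pm ∧ ∀ᵐ x ∂(volume : Measure (Rn n)), pm ≤ p x)
    (hpplus : ∃ P : ℝ, ∀ᵐ x ∂(volume : Measure (Rn n)), p x ≤ P) :
    ∃ C > (0 : ℝ), ∀ u : ℝ → Rn n → ℝ, Measurable (Function.uncurry u) →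
      mixedN n p (n * b / (2 * α)) (duhamel n α fun t x => |u t x| ^ b * u t x) ≤
        ENNReal.ofReal C * mixedN n p (n * b / (2 * α)) u ^ (b + 1) := by
  obtain ⟨pm, hbpm, hpm⟩ := hpminus
  obtain ⟨P, hP⟩ := hpplus
  have hpm' : ∀ x, pm ≤ p x := forall_le_of_ae_le continuous_const hplog.continuous hpm
  have hP' : ∀ x, p x ≤ P := forall_le_of_ae_le hplog.continuous continuous_const hP
  have hn : NeZero n := ⟨by rintro rfl; norm_num at hnb; nlinarith⟩
  have hr : b + 1 < n * b / (2 * α) := by rw [lt_div_iff₀ (by positivity)]; linarith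
  obtain ⟨pinf, C, hp⟩ := hplog.exists_isLogHolder hP'
  obtain ⟨K₁, hK₁⟩ := exists_luxNorm_timeSup_duhamel_le hb hα0 hα1 hnb hp hbpm hpm' hP'
  obtain ⟨K₂, hK₂⟩ := exists_luxNorm_timeSup_duhamel_le hb hα0 hα1 hnb
    (.const (n * b / (2 * α))) hr (fun _ => le_rfl) fun _ => le_rfl
  refine ⟨(max 1 (max K₁ K₂) : ℝ≥0), by positivity, fun u hu => ?_⟩
  have hu₂ : mixedN n (fun _ => n * b / (2 * α)) (n * b / (2 * α)) u ≤
      mixedN n p (n * b / (2 * α)) u := (max_self _).trans_le (le_max_right _ _)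
  rw [ENNReal.ofReal_coe_nnreal]
  refine max_le ((hK₁ u hu).trans ?_) ((hK₂ u hu).trans ?_)
  · gcongr
    simp
  · gcongr
    simp

/-- Control of the nonlinear term (γ = 0) in mixed variable Lebesgue spaces. -/
theorem stmt9 (n b : ℕ) (hn : 1 ≤ n) (hb : 1 ≤ b) (α : ℝ) (hα : 1/2 < α ∧ α ≤ 1)
    (h2α : 2 * α < n) (hnb : 2 * α * ((b:ℝ) + 1) < (n:ℝ) * b)
    (p : Rn n → ℝ) (hplog : IsPLog univ p)
    (hpminus : ∃ pm : ℝ, (b:ℝ) + 1 < pm ∧ ∀ᵐ x ∂(volume : Measure (Rn n)), pm ≤ p x)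
    (hpplus : ∃ P : ℝ, (∀ᵐ x ∂(volume : Measure (Rn n)), p x ≤ P) ∧
      2 * α * P < (n:ℝ) * ((b:ℝ) + 1)) :
    ∃ C > (0:ℝ), ∀ u : ℝ → Rn n → ℝ, Measurable (Function.uncurry u) →
      mixedN n p ((n:ℝ) * b / (2 * α))
        (fun t x => ∫ s in Ioc (0:ℝ) t,
          conv n (gKer n α (t - s)) (fun y => |u s y| ^ b * u s y) x)
      ≤ ENNReal.ofReal C * (mixedN n p ((n:ℝ) * b / (2 * α)) u) ^ (b + 1) := by
  have h := stmt9_general n b (by exact_mod_cast hb) α (by linarith) hα.2 hnb p hplog hpminus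
    (hpplus.imp fun _ => And.left)
  simp only [Real.rpow_natCast, ← Nat.cast_add_one, ENNReal.rpow_natCast] at h
  exact h
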